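/- Among the Co₀-orbits of Leech vectors of type at most 16, the conjugacy classes modulo 3Λ are exactly the following (orbits in the same class are pairwise conjugate modulo 3Λ, and orbits in different classes are not): {O₀}; {O₂, O_{8a}, O_{14c}}; {O₃, O_{12a}, O_{12b}, O_{15a}}; {O₄, O_{10b}, O_{13a}, O_{16a}, O_{16b}, O_{16d}}; {O₅, O_{8c}, O_{11a}, O_{14a}, O_{14d}}; {O_{6a}, O_{9a}, O_{12c}, O_{12e}, O_{15b}, O_{15e}}; {O_{6b}, O_{12d}, O_{15c}}; {O₇, O_{10a}, O_{10c}, O_{13b}, O_{13c}, O_{16c}, O_{16e}, O_{16f}, O_{16g}}; {O_{8b}, O_{11b}, O_{14b}, O_{14e}}; {O_{9b}, O_{12f}, O_{15d}}. -/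

import Mathlib

open Complex Matrix UpperHalfPlane
open scoped Manifold MatrixGroups Real Topology BigOperators

noncomputable section

/-- Vectors of the rank-24 lattice (coordinates w.r.t. a fixed basis). -/
abbrev LV := Fin 24 → ℤ

/-- Complexified vectors. -/
abbrev CV := Fin 24 → ℂ

/-- The bilinear form attached to a Gram matrix `B`. -/
def pairZ (B : Matrix (Fin 24) (Fin 24) ℤ) (v u : LV) : ℤ := v ⬝ᵥ B.mulVec u

/-- The complex bilinear extension of the form. -/
def pairC (B : Matrix (Fin 24) (Fin 24) ℤ) (z w : CV) : ℂ :=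
  z ⬝ᵥ ((B.map (Int.cast : ℤ → ℂ)).mulVec w)

/-- Inclusion of lattice vectors into complexified vectors. -/
def liftC (v : LV) : CV := fun i => (v i : ℂ)

/-- `B` is a Gram matrix of the Leech lattice: even, unimodular, positive definite of
rank 24, with no vectors of norm 2 (no roots). -/
def IsLeech (B : Matrix (Fin 24) (Fin 24) ℤ) : Prop :=
  B.IsSymm ∧ B.det = 1 ∧ (∀ v : LV, v ≠ 0 → 0 < pairZ B v v) ∧
    (∀ v : LV, Even (pairZ B v v)) ∧ (∀ v : LV, pairZ B v v ≠ 2)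

/-- The automorphism group `Co₀ = Aut(Λ)` of the lattice, as a set of integral matrices. -/
def ConwayGroup (B : Matrix (Fin 24) (Fin 24) ℤ) : Set (Matrix (Fin 24) (Fin 24) ℤ) :=
  {σ | IsUnit σ.det ∧ σᵀ * B * σ = B}

/-- Action of an integral matrix on complexified vectors. -/
def actC (σ : Matrix (Fin 24) (Fin 24) ℤ) (z : CV) : CV :=
  (σ.map (Int.cast : ℤ → ℂ)).mulVec z

/-- `e(x) = exp(2πix)`. -/
def eC (x : ℂ) : ℂ := Complex.exp (2 * (Real.pi : ℂ) * Complex.I * x)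

/-- The Fourier term `qⁿ ζ^ℓ`. -/
def fterm (B : Matrix (Fin 24) (Fin 24) ℤ) (n : ℕ) (ℓ : LV) (τ : UpperHalfPlane) (z : CV) : ℂ :=
  eC ((n : ℂ) * (τ : ℂ)) * eC (pairC B (liftC ℓ) z)

/-- Lower-left entry of `A ∈ SL(2,ℤ)`, as a complex number. -/
def slc (A : SL(2, ℤ)) : ℂ := ((A : Matrix (Fin 2) (Fin 2) ℤ) 1 0 : ℤ)

/-- Lower-right entry of `A ∈ SL(2,ℤ)`, as a complex number. -/
def sld (A : SL(2, ℤ)) : ℂ := ((A : Matrix (Fin 2) (Fin 2) ℤ) 1 1 : ℤ)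

/-- The automorphy factor `cτ + d`. -/
def jfactor (A : SL(2, ℤ)) (τ : UpperHalfPlane) : ℂ := slc A * (τ : ℂ) + sld A

/-- `φ : ℍ × (Λ⊗ℂ) → ℂ` is a Conway invariant weak Jacobi form of weight `k` and index `t`
with Fourier coefficients `f`. -/
structure IsJacobiFormWith (B : Matrix (Fin 24) (Fin 24) ℤ) (k : ℤ) (t : ℕ)
    (φ : UpperHalfPlane → CV → ℂ) (f : ℕ → LV → ℂ) : Prop where
  holo_tau : ∀ z : CV, MDifferentiable 𝓘(ℂ) 𝓘(ℂ) fun τ : UpperHalfPlane => φ τ z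
  holo_z : ∀ τ : UpperHalfPlane, Differentiable ℂ (φ τ)
  conway_invar : ∀ σ ∈ ConwayGroup B, ∀ (τ : UpperHalfPlane) (z : CV), φ τ (actC σ z) = φ τ z
  quasi_periodic : ∀ (x y : LV) (τ : UpperHalfPlane) (z : CV),
    φ τ (z + (τ : ℂ) • liftC x + liftC y) =
      Complex.exp (-(t : ℂ) * (Real.pi : ℂ) * Complex.I * (pairZ B x x : ℂ) * (τ : ℂ)
        - 2 * (t : ℂ) * (Real.pi : ℂ) * Complex.I * pairC B (liftC x) z) * φ τ z
  modular : ∀ (A : SL(2, ℤ)) (τ : UpperHalfPlane) (z : CV),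
    φ (A • τ) ((jfactor A τ)⁻¹ • z) =
      (jfactor A τ) ^ k *
        Complex.exp ((t : ℂ) * (Real.pi : ℂ) * Complex.I * slc A * pairC B z z / jfactor A τ) *
        φ τ z
  expansion : ∀ (τ : UpperHalfPlane) (z : CV),
    HasSum (fun p : ℕ × LV => f p.1 p.2 * fterm B p.1 p.2 τ z) (φ τ z)

/-- Conway invariant weak Jacobi forms. -/
def IsWeakJacobiForm (B : Matrix (Fin 24) (Fin 24) ℤ) (k : ℤ) (t : ℕ)
    (φ : UpperHalfPlane → CV → ℂ) : Prop :=
  ∃ f, IsJacobiFormWith B k t φ f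

/-- Conway invariant holomorphic Jacobi forms. -/
def IsHolJacobiForm (B : Matrix (Fin 24) (Fin 24) ℤ) (k : ℤ) (t : ℕ)
    (φ : UpperHalfPlane → CV → ℂ) : Prop :=
  ∃ f, IsJacobiFormWith B k t φ f ∧
    ∀ (n : ℕ) (ℓ : LV), 2 * (n : ℤ) * t - pairZ B ℓ ℓ < 0 → f n ℓ = 0

/-- Modular forms of weight `k` on `SL₂(ℤ)`; the ring of all of them is `ℂ[E₄,E₆]`. -/
abbrev MForm (k : ℤ) := ModularForm (CongruenceSubgroup.Gamma 1) k

/-- The family `φ i` (of weights `w i`) freely generates the module of all forms satisfying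
`P` over the ring `M_*(SL₂(ℤ)) = ℂ[E₄,E₆]` of modular forms on `SL₂(ℤ)`. -/
def FreelyGenerates (P : ℤ → (UpperHalfPlane → CV → ℂ) → Prop) {n : ℕ}
    (w : Fin n → ℤ) (φ : Fin n → UpperHalfPlane → CV → ℂ) : Prop :=
  (∀ i, P (w i) (φ i)) ∧
  ∀ (k : ℤ) (ψ : UpperHalfPlane → CV → ℂ), P k ψ →
    ∃! g : (i : Fin n) → MForm (k - w i),
      ∀ (τ : UpperHalfPlane) (z : CV), ψ τ z = ∑ i, (g i) τ * φ i τ z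

/-- The point `(aτ+b)/d` of the upper half-plane (for `a, d > 0`). -/
def heckePt (a d b : ℕ) (τ : UpperHalfPlane) : UpperHalfPlane :=
  if h : 0 < ((((a : ℂ) * (τ : ℂ) + (b : ℂ)) / (d : ℂ)).im) then
    ⟨((a : ℂ) * (τ : ℂ) + (b : ℂ)) / (d : ℂ), h⟩ else τ

/-- The Hecke operator `T₋(m)` on Jacobi forms of weight `k`. -/
def heckeOp (k : ℤ) (m : ℕ) (φ : UpperHalfPlane → CV → ℂ) : UpperHalfPlane → CV → ℂ :=
  fun τ z => (m : ℂ)⁻¹ * ∑ d ∈ m.divisors, ∑ b ∈ Finset.range d,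
    ((m / d : ℕ) : ℂ) ^ k * φ (heckePt (m / d) d b τ) (((m / d : ℕ) : ℂ) • z)

/-- The Jacobi theta function `Θ_Λ = A₁` of the lattice. -/
def thetaLeech (B : Matrix (Fin 24) (Fin 24) ℤ) : UpperHalfPlane → CV → ℂ := fun τ z =>
  ∑' ℓ : LV, Complex.exp ((Real.pi : ℂ) * Complex.I * (pairZ B ℓ ℓ : ℂ) * (τ : ℂ)
    + 2 * (Real.pi : ℂ) * Complex.I * pairC B (liftC ℓ) z)

/-- `σ_k(n) = Σ_{d ∣ n} d^k`. -/
def sigmaNat (k n : ℕ) : ℕ := ∑ d ∈ n.divisors, d ^ k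

/-- `A_t = σ₁₁(t)⁻¹ (A₁ | T₋(t))`, a holomorphic Jacobi form of weight 12 and index `t`. -/
def Aform (B : Matrix (Fin 24) (Fin 24) ℤ) (t : ℕ) : UpperHalfPlane → CV → ℂ := fun τ z =>
  ((sigmaNat 11 t : ℂ))⁻¹ * heckeOp 12 t (thetaLeech B) τ z

/-- The quasimodular Eisenstein series `E₂`. -/
def E2 : UpperHalfPlane → ℂ := fun τ =>
  1 - 24 * ∑' n : ℕ, (sigmaNat 1 (n + 1) : ℂ) * eC (((n : ℂ) + 1) * (τ : ℂ))

/-- The discriminant cusp form `Δ(τ) = q ∏ (1-qⁿ)^24`. -/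
def DeltaForm : UpperHalfPlane → ℂ := fun τ =>
  eC (τ : ℂ) * ∏' n : ℕ, (1 - eC (((n : ℂ) + 1) * (τ : ℂ))) ^ 24

/-- `aτ`. -/
def scaleH (a : ℕ) (τ : UpperHalfPlane) : UpperHalfPlane := heckePt a 1 0 τ

/-- `(τ+j)/t`. -/
def sliceH (t j : ℕ) (τ : UpperHalfPlane) : UpperHalfPlane := heckePt 1 t j τ

/-- `f₂(τ) = (tE₂(tτ) - E₂(τ))/(t-1)`, a modular form of weight 2 on `Γ₀(t)`. -/
def f2w (t : ℕ) (τ : UpperHalfPlane) : ℂ := ((t : ℂ) * E2 (scaleH t τ) - E2 τ) / ((t : ℂ) - 1)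

/-- `B_t`, a holomorphic Jacobi form of weight 14 and index `t` (for `t` prime). -/
def Bform (B : Matrix (Fin 24) (Fin 24) ℤ) (t : ℕ) : UpperHalfPlane → CV → ℂ := fun τ z =>
  ((t : ℂ) ^ 12 / ((t : ℂ) ^ 12 - 1)) *
    (f2w t τ * thetaLeech B (scaleH t τ) ((t : ℂ) • z)
      - (t : ℂ) ^ (-13 : ℤ) *
        ∑ j ∈ Finset.range t, f2w t (sliceH t j τ) * thetaLeech B (sliceH t j τ) z)

/-- Fourier coefficients of `E₂`. -/
def e2coeff : ℕ → ℂ := fun m => if m = 0 then 1 else -24 * (sigmaNat 1 m : ℂ)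

/-- Fourier coefficients of the image `H_k(φ)` of the modified heat operator applied to a
Jacobi form of weight `k` and index `t` with Fourier coefficients `f`:
`H_k(φ) = 𝓗(φ) + ((12-k)/12)E₂φ` where `𝓗` multiplies `f(n,ℓ)` by `n - (ℓ,ℓ)/(2t)`. -/
def heatCoeff (B : Matrix (Fin 24) (Fin 24) ℤ) (k : ℤ) (t : ℕ) (f : ℕ → LV → ℂ) :
    ℕ → LV → ℂ := fun n ℓ =>
  ((n : ℂ) - (pairZ B ℓ ℓ : ℂ) / (2 * (t : ℂ))) * f n ℓ +
    ((12 - k : ℤ) : ℂ) / 12 * ∑ m ∈ Finset.range (n + 1), e2coeff m * f (n - m) ℓ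

/-- The function with Fourier coefficients `f`. -/
def fourierSeries (B : Matrix (Fin 24) (Fin 24) ℤ) (f : ℕ → LV → ℂ) :
    UpperHalfPlane → CV → ℂ := fun τ z =>
  ∑' p : ℕ × LV, f p.1 p.2 * fterm B p.1 p.2 τ z

/-- The family `Φ m = Φ_{12,m}` of Fourier–Jacobi coefficients of the Borcherds form `Φ₁₂`
at the Leech cusp:
`Δ(τ)·exp(−Σ_{m≥1}((Δ⁻¹A₁)|T₋(m))(τ,𝔷)e^{2πimω}) = Σ_{m≥0} Φ_{12,m}(τ,𝔷)e^{2πimω}`. -/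
def IsFJExpansionOfPhi12 (B : Matrix (Fin 24) (Fin 24) ℤ)
    (Φ : ℕ → UpperHalfPlane → CV → ℂ) : Prop :=
  ∀ (τ ω : UpperHalfPlane) (z : CV),
    HasSum (fun m : ℕ => Φ m τ z * eC ((m : ℂ) * (ω : ℂ)))
      (DeltaForm τ * Complex.exp
        (- ∑' m : ℕ, heckeOp 0 (m + 1) (fun σ w => thetaLeech B σ w / DeltaForm σ) τ z *
            eC (((m : ℂ) + 1) * (ω : ℂ))))

/-- `S_t`: the set of lattice vectors of minimal norm in their coset modulo `tΛ`. -/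
def minimalSet (B : Matrix (Fin 24) (Fin 24) ℤ) (t : ℕ) : Set LV :=
  {v | ∀ u : LV, (∃ w : LV, u = v + (t : ℤ) • w) → pairZ B v v ≤ pairZ B u u}

/-- `v` and `u` are conjugate modulo `tΛ` up to the Conway group. -/
def conjModT (B : Matrix (Fin 24) (Fin 24) ℤ) (t : ℕ) (v u : LV) : Prop :=
  ∃ σ ∈ ConwayGroup B, ∃ w : LV, v - σ.mulVec u = (t : ℤ) • w

/-- `s(t) = |(S_t/Co₀)/tΛ|`. -/
def sRank (B : Matrix (Fin 24) (Fin 24) ℤ) (t : ℕ) : ℕ :=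
  Nat.card (Quot (fun v u : minimalSet B t => conjModT B t v.1 u.1))

/-- `R` is a system of representatives for `(S_t/Co₀)/tΛ` (of minimal length). -/
def IsRepSystem (B : Matrix (Fin 24) (Fin 24) ℤ) (t : ℕ) (R : Finset LV) : Prop :=
  (↑R ⊆ minimalSet B t) ∧ ∀ v ∈ minimalSet B t, ∃! r, r ∈ R ∧ conjModT B t v r

/-- The Conway orbit of a lattice vector. -/
def orbitOf (B : Matrix (Fin 24) (Fin 24) ℤ) (v : LV) : Set LV :=
  {u | ∃ σ ∈ ConwayGroup B, u = σ.mulVec v}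

/-- `O` is a Conway orbit of Leech vectors of type `x` (i.e. norm `2x`) with `c` elements. -/
def OrbitData (B : Matrix (Fin 24) (Fin 24) ℤ) (O : Set LV) (x c : ℕ) : Prop :=
  (∃ v : LV, O = orbitOf B v) ∧ (∀ v ∈ O, pairZ B v v = 2 * (x : ℤ)) ∧ Nat.card O = c

/-- `W` is a `d`-dimensional subspace of the space of functions `ℍ × (Λ⊗ℂ) → ℂ`. -/
def SpanDimIs (W : (UpperHalfPlane → CV → ℂ) → Prop) (d : ℕ) : Prop :=
  ∃ φ : Fin d → UpperHalfPlane → CV → ℂ, (∀ i, W (φ i)) ∧ LinearIndependent ℂ φ ∧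
    ∀ ψ, W ψ → ∃ c : Fin d → ℂ, ψ = ∑ i, c i • φ i


/-- Two Conway orbits are conjugate modulo `3Λ` if some of their vectors are congruent
modulo `3Λ`. -/
def conjOrb3 (O O' : Set LV) : Prop :=
  ∃ v ∈ O, ∃ u ∈ O', ∃ w : LV, v - u = (3 : ℤ) • w


section LeechAux

variable {B : Matrix (Fin 24) (Fin 24) ℤ}

lemma pz_add_left (x y z : LV) : pairZ B (x + y) z = pairZ B x z + pairZ B y z := by
  simp [pairZ, add_dotProduct]

lemma pz_add_right (x y z : LV) : pairZ B x (y + z) = pairZ B x y + pairZ B x z := by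
  simp [pairZ, Matrix.mulVec_add, dotProduct_add]

lemma pz_sub_left (x y z : LV) : pairZ B (x - y) z = pairZ B x z - pairZ B y z := by
  simp [pairZ, sub_dotProduct]

lemma pz_sub_right (x y z : LV) : pairZ B x (y - z) = pairZ B x y - pairZ B x z := by
  simp [pairZ, Matrix.mulVec_sub, dotProduct_sub]

lemma pz_neg_left (x z : LV) : pairZ B (-x) z = - pairZ B x z := by
  simp [pairZ, neg_dotProduct]

lemma pz_neg_right (x z : LV) : pairZ B x (-z) = - pairZ B x z := by
  simp [pairZ, Matrix.mulVec_neg, dotProduct_neg]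

lemma pz_smul_left (c : ℤ) (x z : LV) : pairZ B (c • x) z = c * pairZ B x z := by
  unfold pairZ; rw [smul_dotProduct, smul_eq_mul]

lemma pz_smul_right (c : ℤ) (x z : LV) : pairZ B x (c • z) = c * pairZ B x z := by
  unfold pairZ; rw [Matrix.mulVec_smul, dotProduct_smul, smul_eq_mul]

lemma pz_zero_left (x : LV) : pairZ B 0 x = 0 := by simp [pairZ]

lemma pz_zero_right (x : LV) : pairZ B x 0 = 0 := by simp [pairZ]

lemma pz_sum_left {ι : Type*} (s : Finset ι) (f : ι → LV) (z : LV) :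
    pairZ B (∑ i ∈ s, f i) z = ∑ i ∈ s, pairZ B (f i) z := by
  classical
  induction s using Finset.induction_on with
  | empty => simp [pz_zero_left]
  | insert a s ha ih => rw [Finset.sum_insert ha, Finset.sum_insert ha, pz_add_left, ih]

lemma pz_sum_right {ι : Type*} (s : Finset ι) (f : ι → LV) (z : LV) :
    pairZ B z (∑ i ∈ s, f i) = ∑ i ∈ s, pairZ B z (f i) := by
  classical
  induction s using Finset.induction_on with
  | empty => simp [pz_zero_right]
  | insert a s ha ih => rw [Finset.sum_insert ha, Finset.sum_insert ha, pz_add_right, ih]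

lemma pz_comm (hB : IsLeech B) (x y : LV) : pairZ B x y = pairZ B y x := by
  have h := hB.1
  unfold pairZ
  rw [Matrix.dotProduct_mulVec, ← Matrix.mulVec_transpose, h.eq, dotProduct_comm]

lemma N_sub (hB : IsLeech B) (x y : LV) :
    pairZ B (x - y) (x - y) = pairZ B x x + pairZ B y y - 2 * pairZ B x y := by
  rw [pz_sub_left, pz_sub_right, pz_sub_right, pz_comm hB y x]; ring

lemma N_add (hB : IsLeech B) (x y : LV) :
    pairZ B (x + y) (x + y) = pairZ B x x + pairZ B y y + 2 * pairZ B x y := by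
  rw [pz_add_left, pz_add_right, pz_add_right, pz_comm hB y x]; ring

lemma N_smul (c : ℤ) (x : LV) : pairZ B (c • x) (c • x) = c ^ 2 * pairZ B x x := by
  rw [pz_smul_left, pz_smul_right]; ring

lemma N_neg (x : LV) : pairZ B (-x) (-x) = pairZ B x x := by
  rw [pz_neg_left, pz_neg_right]; ring

lemma N_nonneg (hB : IsLeech B) (x : LV) : 0 ≤ pairZ B x x := by
  by_cases h : x = 0
  · subst h; rw [pz_zero_left]
  · exact (hB.2.2.1 x h).le

lemma N_eq_zero (hB : IsLeech B) {x : LV} (h : pairZ B x x = 0) : x = 0 := by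
  by_contra hx
  have := hB.2.2.1 x hx
  omega

lemma N_ge_four (hB : IsLeech B) {x : LV} (h : x ≠ 0) : 4 ≤ pairZ B x x := by
  have h1 := hB.2.2.1 x h
  obtain ⟨k, hk⟩ := hB.2.2.2.1 x
  have h3 := hB.2.2.2.2 x
  omega

lemma pz_cs (hB : IsLeech B) (x y : LV) :
    pairZ B x y ^ 2 ≤ pairZ B x x * pairZ B y y := by
  by_cases hy : y = 0
  · subst hy; simp [pz_zero_right]
  have hp := hB.2.2.1 y hy
  have h := N_nonneg hB (pairZ B y y • x - pairZ B x y • y)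
  rw [N_sub hB, N_smul, N_smul, pz_smul_left, pz_smul_right] at h
  have h2 : 0 ≤ pairZ B y y * (pairZ B x x * pairZ B y y - pairZ B x y ^ 2) := by linarith
  have h3 := nonneg_of_mul_nonneg_right h2 hp
  linarith

/-- group facts -/
lemma cg_pair {s : Matrix (Fin 24) (Fin 24) ℤ} (hs : s ∈ ConwayGroup B) (x y : LV) :
    pairZ B (s.mulVec x) (s.mulVec y) = pairZ B x y := by
  have h := hs.2
  unfold pairZ
  conv_rhs => rw [← h]
  rw [← Matrix.mulVec_mulVec, ← Matrix.mulVec_mulVec, Matrix.dotProduct_mulVec x, ← Matrix.mulVec_transpose,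
    Matrix.transpose_transpose]

lemma cg_one : (1 : Matrix (Fin 24) (Fin 24) ℤ) ∈ ConwayGroup B := by
  refine ⟨by simp, by simp⟩

lemma cg_mul {s t : Matrix (Fin 24) (Fin 24) ℤ} (hs : s ∈ ConwayGroup B)
    (ht : t ∈ ConwayGroup B) : s * t ∈ ConwayGroup B := by
  refine ⟨by rw [Matrix.det_mul]; exact hs.1.mul ht.1, ?_⟩
  rw [Matrix.transpose_mul]
  calc tᵀ * sᵀ * B * (s * t) = tᵀ * (sᵀ * B * s) * t := by simp only [Matrix.mul_assoc]
    _ = B := by rw [hs.2, ht.2]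

lemma cg_inv {s : Matrix (Fin 24) (Fin 24) ℤ} (hs : s ∈ ConwayGroup B) :
    s⁻¹ ∈ ConwayGroup B := by
  have h1 : s * s⁻¹ = 1 := Matrix.mul_nonsing_inv s hs.1
  refine ⟨Matrix.isUnit_nonsing_inv_det s hs.1, ?_⟩
  calc (s⁻¹)ᵀ * B * s⁻¹ = (s⁻¹)ᵀ * (sᵀ * B * s) * s⁻¹ := by rw [hs.2]
    _ = (s * s⁻¹)ᵀ * B * (s * s⁻¹) := by rw [Matrix.transpose_mul]; simp only [Matrix.mul_assoc]
    _ = B := by rw [h1]; simp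

lemma cg_inv_mulVec {s : Matrix (Fin 24) (Fin 24) ℤ} (hs : s ∈ ConwayGroup B) (x : LV) :
    s.mulVec (s⁻¹.mulVec x) = x := by
  rw [Matrix.mulVec_mulVec, Matrix.mul_nonsing_inv s hs.1, Matrix.one_mulVec]

lemma cg_mulVec_inv {s : Matrix (Fin 24) (Fin 24) ℤ} (hs : s ∈ ConwayGroup B) (x : LV) :
    s⁻¹.mulVec (s.mulVec x) = x := by
  rw [Matrix.mulVec_mulVec, Matrix.nonsing_inv_mul s hs.1, Matrix.one_mulVec]

lemma cg_inj {s : Matrix (Fin 24) (Fin 24) ℤ} (hs : s ∈ ConwayGroup B) :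
    Function.Injective (s.mulVec : LV → LV) := by
  intro x y h
  have := congrArg (s⁻¹.mulVec) h
  simpa [cg_mulVec_inv hs] using this

/-- finite orbit of vectors of type `a`. -/
structure IsOrb (B : Matrix (Fin 24) (Fin 24) ℤ) (O : Finset LV) (a : ℤ) : Prop where
  ne : O.Nonempty
  trans : ∀ v ∈ O, ∀ u ∈ O, ∃ s ∈ ConwayGroup B, u = s.mulVec v
  closed : ∀ s ∈ ConwayGroup B, ∀ v ∈ O, s.mulVec v ∈ O
  norm : ∀ v ∈ O, pairZ B v v = 2 * a

lemma orbitData_orb {O : Set LV} {x c : ℕ} (h : OrbitData B O x c) (hc : c ≠ 0) :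
    ∃ F : Finset LV, (F : Set LV) = O ∧ IsOrb B F x ∧ F.card = c := by
  obtain ⟨⟨v, hv⟩, hn, hcard⟩ := h
  have hfin : O.Finite := by
    by_contra hinf
    have : Infinite O := Set.infinite_coe_iff.mpr hinf
    rw [Nat.card_eq_zero_of_infinite] at hcard
    exact hc hcard.symm
  refine ⟨hfin.toFinset, by simp, ⟨?_, ?_, ?_, ?_⟩, ?_⟩
  · refine ⟨v, ?_⟩
    simp only [Set.Finite.mem_toFinset, hv]
    exact ⟨1, cg_one, by simp⟩
  · intro a ha b hb
    simp only [Set.Finite.mem_toFinset, hv] at ha hb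
    obtain ⟨s, hs, rfl⟩ := ha
    obtain ⟨t, ht, rfl⟩ := hb
    refine ⟨t * s⁻¹, cg_mul ht (cg_inv hs), ?_⟩
    rw [← Matrix.mulVec_mulVec, cg_mulVec_inv hs]
  · intro s hs a ha
    simp only [Set.Finite.mem_toFinset, hv] at ha ⊢
    obtain ⟨t, ht, rfl⟩ := ha
    exact ⟨s * t, cg_mul hs ht, by rw [Matrix.mulVec_mulVec]⟩
  · intro a ha
    exact hn a (by simpa using ha)
  · rw [← hcard, Nat.card_eq_card_finite_toFinset hfin]

/-- double counting of an invariant relation between two orbits -/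
lemma orb_const {O : Finset LV} {a : ℤ} (hO : IsOrb B O a)
    (f : LV → ℤ) (hf : ∀ s ∈ ConwayGroup B, ∀ v, f (s.mulVec v) = f v) :
    ∀ v ∈ O, ∀ u ∈ O, f v = f u := by
  intro v hv u hu
  obtain ⟨s, hs, rfl⟩ := hO.trans v hv u hu
  exact (hf s hs v).symm

lemma orb_sum_inv {O : Finset LV} {a : ℤ} (hO : IsOrb B O a) (g : LV → LV → ℤ)
    (hg : ∀ s ∈ ConwayGroup B, ∀ v u, g (s.mulVec v) (s.mulVec u) = g v u) :
    ∀ s ∈ ConwayGroup B, ∀ v, ∑ u ∈ O, g (s.mulVec v) u = ∑ u ∈ O, g v u := by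
  intro s hs v
  symm
  refine Finset.sum_bij (fun u _ => s.mulVec u) ?_ ?_ ?_ ?_
  · intro u hu; exact hO.closed s hs u hu
  · intro x _ y _ h; exact cg_inj hs h
  · intro u hu
    exact ⟨s⁻¹.mulVec u, hO.closed _ (cg_inv hs) u hu, cg_inv_mulVec hs u⟩
  · intro u hu; exact (hg s hs v u).symm

lemma orb_double {O R : Finset LV} {a b : ℤ} (hO : IsOrb B O a) (hR : IsOrb B R b)
    (g : LV → LV → ℤ)
    (hg : ∀ s ∈ ConwayGroup B, ∀ v u, g (s.mulVec v) (s.mulVec u) = g v u)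
    {u₀ v₀ : LV} (hu : u₀ ∈ O) (hv : v₀ ∈ R) :
    (O.card : ℤ) * ∑ v ∈ R, g u₀ v = (R.card : ℤ) * ∑ u ∈ O, g u v₀ := by
  have h1 : ∀ u ∈ O, ∑ v ∈ R, g u v = ∑ v ∈ R, g u₀ v := fun u hu' =>
    orb_const hO (fun u => ∑ v ∈ R, g u v) (orb_sum_inv hR g hg) u hu' u₀ hu
  have h2 : ∀ v ∈ R, ∑ u ∈ O, g u v = ∑ u ∈ O, g u v₀ := fun v hv' =>
    orb_const hR (fun v => ∑ u ∈ O, g u v)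
      (orb_sum_inv hO (fun x y => g y x) (fun s hs v u => hg s hs u v)) v hv' v₀ hv
  calc (O.card : ℤ) * ∑ v ∈ R, g u₀ v = ∑ u ∈ O, ∑ v ∈ R, g u v := by
        rw [Finset.sum_congr rfl h1]; simp
    _ = ∑ v ∈ R, ∑ u ∈ O, g u v := Finset.sum_comm
    _ = _ := by rw [Finset.sum_congr rfl h2]; simp

/-- residue classes -/
def resid (m : ℕ) (x : LV) : Fin 24 → ZMod m := fun i => (x i : ZMod m)

lemma resid_eq_iff (m : ℕ) (x y : LV) :
    resid m x = resid m y ↔ ∃ w : LV, x - y = (m : ℤ) • w := by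
  constructor
  · intro h
    have h1 : ∀ i, ∃ c : ℤ, x i - y i = m * c := by
      intro i
      have h2 := congrFun h i
      simp only [resid] at h2
      have h3 := (ZMod.intCast_eq_intCast_iff_dvd_sub (y i) (x i) m).mp h2.symm
      exact h3
    choose w hw using h1
    exact ⟨w, by ext i; simp [hw i]⟩
  · rintro ⟨w, hw⟩
    ext i
    have h2 := congrFun hw i
    simp only [Pi.sub_apply, Pi.smul_apply, smul_eq_mul] at h2
    have h3 : x i = y i + m * w i := by linarith
    simp [resid, h3]

lemma resid_cg (m : ℕ) {s : Matrix (Fin 24) (Fin 24) ℤ} (hs : s ∈ ConwayGroup B) (x y : LV) :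
    resid m (s.mulVec x) = resid m (s.mulVec y) ↔ resid m x = resid m y := by
  have key : ∀ (t : Matrix (Fin 24) (Fin 24) ℤ) (x y : LV), resid m x = resid m y →
      resid m (t.mulVec x) = resid m (t.mulVec y) := by
    intro t x y h
    rw [resid_eq_iff] at h ⊢
    obtain ⟨w, hw⟩ := h
    exact ⟨t.mulVec w, by rw [← Matrix.mulVec_sub, hw, Matrix.mulVec_smul]⟩
  constructor
  · intro h
    have := key s⁻¹ _ _ h
    simpa [cg_mulVec_inv hs] using this
  · exact key s x y

end LeechAux

section LeechAux

variable {B : Matrix (Fin 24) (Fin 24) ℤ}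

lemma real_psd (hB : IsLeech B) : (B.map (Int.cast : ℤ → ℝ)).PosSemidef := by
  set M : Matrix (Fin 24) (Fin 24) ℝ := B.map (Int.cast : ℤ → ℝ) with hM
  have hint : ∀ v : LV, (0 : ℝ) ≤ (fun i => (v i : ℝ)) ⬝ᵥ M.mulVec (fun i => (v i : ℝ)) := by
    intro v
    have h := N_nonneg hB v
    have h2 : ((pairZ B v v : ℤ) : ℝ) = (fun i => (v i : ℝ)) ⬝ᵥ M.mulVec (fun i => (v i : ℝ)) := by
      simp [pairZ, dotProduct, Matrix.mulVec, hM]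
    rw [← h2]; exact_mod_cast h
  have hrat : ∀ q : Fin 24 → ℚ,
      (0 : ℝ) ≤ (fun i => (q i : ℝ)) ⬝ᵥ M.mulVec (fun i => (q i : ℝ)) := by
    intro q
    obtain ⟨b, hb⟩ := IsLocalization.exist_integer_multiples_of_finite (nonZeroDivisors ℤ) q
    choose v hv using hb
    have hb0 : ((b : ℤ) : ℝ) ≠ 0 := by
      exact_mod_cast nonZeroDivisors.ne_zero b.2
    have hv' : ∀ i, (v i : ℝ) = (b : ℤ) * (q i : ℝ) := by
      intro i
      have h3 := hv i
      simp only [algebraMap_int_eq, eq_intCast, zsmul_eq_mul] at h3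
      exact_mod_cast congrArg (Rat.cast : ℚ → ℝ) h3
    have h4 := hint v
    have h5 : (fun i => (v i : ℝ)) = ((b : ℤ) : ℝ) • (fun i => (q i : ℝ)) := by
      ext i; simp [hv' i]
    rw [h5, Matrix.mulVec_smul, smul_dotProduct, dotProduct_smul, smul_smul, smul_eq_mul] at h4
    exact nonneg_of_mul_nonneg_right h4 (mul_self_pos.mpr hb0)
  have hall : ∀ x : Fin 24 → ℝ, 0 ≤ x ⬝ᵥ M.mulVec x := by
    have hd : DenseRange (fun q : Fin 24 → ℚ => fun i => (q i : ℝ)) :=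
      DenseRange.piMap (fun _ => Rat.denseRange_cast)
    intro x
    refine hd.induction_on (p := fun x => 0 ≤ x ⬝ᵥ M.mulVec x) x ?_ hrat
    have hc : Continuous (fun x : Fin 24 → ℝ => x ⬝ᵥ M.mulVec x) := by
      unfold dotProduct Matrix.mulVec dotProduct
      fun_prop
    exact isClosed_le continuous_const hc
  refine Matrix.PosSemidef.of_dotProduct_mulVec_nonneg ?_ ?_
  · ext i j
    simp only [hM, Matrix.conjTranspose_apply, Matrix.map_apply, star_trivial]
    rw [hB.1.apply]
  · intro x; simpa using hall x

open MatrixOrder Matrix.Norms.L2Operator in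
lemma exists_embed (hB : IsLeech B) :
    ∃ e : LV → Fin 24 → ℝ, ∀ x y, e x ⬝ᵥ e y = (pairZ B x y : ℝ) := by
  obtain ⟨P, hP⟩ := CStarAlgebra.nonneg_iff_eq_star_mul_self.mp (real_psd hB).nonneg
  rw [Matrix.star_eq_conjTranspose] at hP
  refine ⟨fun x => P.mulVec (fun i => (x i : ℝ)), fun x y => ?_⟩
  have h2 : ((pairZ B x y : ℤ) : ℝ) =
      (fun i => (x i : ℝ)) ⬝ᵥ (B.map (Int.cast : ℤ → ℝ)).mulVec (fun i => (y i : ℝ)) := by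
    simp [pairZ, dotProduct, Matrix.mulVec]
  rw [h2, hP, ← Matrix.mulVec_mulVec, Matrix.dotProduct_mulVec _ Pᴴ, ← Matrix.mulVec_transpose]
  rw [Matrix.conjTranspose_eq_transpose_of_trivial, Matrix.transpose_transpose]

lemma frame_le (hB : IsLeech B) (S : Finset LV) :
    (∑ v ∈ S, pairZ B v v) ^ 2 ≤ 24 * ∑ v ∈ S, ∑ u ∈ S, pairZ B v u ^ 2 ∧
    ((∑ v ∈ S, pairZ B v v) ^ 2 = 24 * ∑ v ∈ S, ∑ u ∈ S, pairZ B v u ^ 2 →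
      ∀ x : LV, 24 * ∑ v ∈ S, pairZ B x v ^ 2 = (∑ v ∈ S, pairZ B v v) * pairZ B x x) := by
  obtain ⟨e, he⟩ := exists_embed hB
  set T : Fin 24 → Fin 24 → ℝ := fun i j => ∑ v ∈ S, e v i * e v j with hT
  set tr : ℝ := ∑ i, T i i with htr
  have h1 : ((∑ v ∈ S, pairZ B v v : ℤ) : ℝ) = tr := by
    push_cast
    rw [htr, hT, Finset.sum_comm]
    exact Finset.sum_congr rfl fun v _ => (he v v).symm
  have h2 : ((∑ v ∈ S, ∑ u ∈ S, pairZ B v u ^ 2 : ℤ) : ℝ) = ∑ i, ∑ j, T i j ^ 2 := by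
    push_cast
    calc ∑ v ∈ S, ∑ u ∈ S, (pairZ B v u : ℝ) ^ 2
        = ∑ v ∈ S, ∑ u ∈ S, ∑ i, ∑ j, (e v i * e v j) * (e u i * e u j) := by
          refine Finset.sum_congr rfl fun v _ => Finset.sum_congr rfl fun u _ => ?_
          rw [← he v u, dotProduct, sq, Finset.sum_mul_sum]
          exact Finset.sum_congr rfl fun i _ => Finset.sum_congr rfl fun j _ => by ring
      _ = ∑ v ∈ S, ∑ i, ∑ j, ∑ u ∈ S, (e v i * e v j) * (e u i * e u j) := by
          refine Finset.sum_congr rfl fun v _ => ?_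
          rw [Finset.sum_comm]
          exact Finset.sum_congr rfl fun i _ => Finset.sum_comm
      _ = ∑ i, ∑ j, ∑ v ∈ S, ∑ u ∈ S, (e v i * e v j) * (e u i * e u j) := by
          rw [Finset.sum_comm]
          exact Finset.sum_congr rfl fun i _ => Finset.sum_comm
      _ = _ := by
          refine Finset.sum_congr rfl fun i _ => Finset.sum_congr rfl fun j _ => ?_
          rw [sq, hT, Finset.sum_mul_sum]
  have h3 : ∑ i, ∑ j, (T i j - (if i = j then tr / 24 else 0)) ^ 2
      = ∑ i, ∑ j, T i j ^ 2 - tr ^ 2 / 24 := by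
    have : ∀ i j, (T i j - (if i = j then tr / 24 else 0)) ^ 2
        = T i j ^ 2 - (if i = j then 2 * T i i * (tr / 24) - (tr / 24) ^ 2 else 0) := by
      intro i j
      split_ifs with h
      · subst h; ring
      · ring
    simp only [this, Finset.sum_sub_distrib, Finset.sum_ite_eq, Finset.mem_univ, if_true]
    rw [← Finset.sum_mul, ← Finset.mul_sum, ← htr]
    simp
    ring
  have h4 : 0 ≤ ∑ i, ∑ j, (T i j - (if i = j then tr / 24 else 0)) ^ 2 :=
    Finset.sum_nonneg fun i _ => Finset.sum_nonneg fun j _ => sq_nonneg _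
  constructor
  · have h5 : tr ^ 2 ≤ 24 * ∑ i, ∑ j, T i j ^ 2 := by linarith
    rw [← h1, ← h2] at h5
    exact_mod_cast h5
  · intro heq x
    have h5 : tr ^ 2 = 24 * ∑ i, ∑ j, T i j ^ 2 := by
      rw [← h1, ← h2]; exact_mod_cast heq
    have h6 : ∑ i, ∑ j, (T i j - (if i = j then tr / 24 else 0)) ^ 2 = 0 := by
      rw [h3]; linarith
    have h7 : ∀ i j, T i j = if i = j then tr / 24 else 0 := by
      intro i j
      rw [Finset.sum_eq_zero_iff_of_nonneg
        (fun i _ => Finset.sum_nonneg fun j _ => sq_nonneg _)] at h6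
      have h8 := h6 i (Finset.mem_univ _)
      rw [Finset.sum_eq_zero_iff_of_nonneg (fun j _ => sq_nonneg _)] at h8
      have h9 := h8 j (Finset.mem_univ _)
      have := pow_eq_zero_iff (two_ne_zero) |>.mp h9
      linarith
    have h8 : ∑ v ∈ S, (pairZ B x v : ℝ) ^ 2 = ∑ i, ∑ j, (e x i * e x j) * T i j := by
      calc ∑ v ∈ S, (pairZ B x v : ℝ) ^ 2
          = ∑ v ∈ S, ∑ i, ∑ j, (e x i * e x j) * (e v i * e v j) := by
            refine Finset.sum_congr rfl fun v _ => ?_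
            rw [← he x v, dotProduct, sq, Finset.sum_mul_sum]
            exact Finset.sum_congr rfl fun i _ => Finset.sum_congr rfl fun j _ => by ring
        _ = ∑ i, ∑ j, ∑ v ∈ S, (e x i * e x j) * (e v i * e v j) := by
            rw [Finset.sum_comm]
            exact Finset.sum_congr rfl fun i _ => Finset.sum_comm
        _ = _ := by
            refine Finset.sum_congr rfl fun i _ => Finset.sum_congr rfl fun j _ => ?_
            rw [hT, Finset.mul_sum]
    have h9 : ∑ v ∈ S, (pairZ B x v : ℝ) ^ 2 = (tr / 24) * (pairZ B x x : ℝ) := by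
      rw [h8, ← he x x, dotProduct]
      simp only [h7, mul_ite, mul_zero, Finset.sum_ite_eq, Finset.mem_univ, if_true]
      rw [Finset.mul_sum]
      exact Finset.sum_congr rfl fun i _ => by ring
    have h10 : (24 : ℝ) * ∑ v ∈ S, (pairZ B x v : ℝ) ^ 2
        = ((∑ v ∈ S, pairZ B v v : ℤ) : ℝ) * (pairZ B x x : ℝ) := by
      rw [h9, h1]; ring
    exact_mod_cast h10

end LeechAux

section LeechAux

variable {B : Matrix (Fin 24) (Fin 24) ℤ}

lemma cg_neg_one : (-1 : Matrix (Fin 24) (Fin 24) ℤ) ∈ ConwayGroup B := by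
  refine ⟨?_, by simp⟩
  rw [Matrix.det_neg]; simp

lemma orb_neg {O : Finset LV} {a : ℤ} (hO : IsOrb B O a) {v : LV} (hv : v ∈ O) : -v ∈ O := by
  have := hO.closed _ cg_neg_one v hv
  simpa [Matrix.neg_mulVec] using this

lemma fiber_tight {α β : Type*} [DecidableEq β] (s : Finset α) (f : α → β) (d : ℕ)
    (h : ∀ x ∈ s, (s.filter (fun y => f y = f x)).card ≤ d)
    (heq : d * (s.image f).card ≤ s.card) :
    ∀ x ∈ s, (s.filter (fun y => f y = f x)).card = d := by
  have h1 : s.card = ∑ b ∈ s.image f, (s.filter (fun y => f y = b)).card :=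
    Finset.card_eq_sum_card_image f s
  have h2 : ∀ b ∈ s.image f, (s.filter (fun y => f y = b)).card ≤ d := by
    intro b hb
    obtain ⟨x, hx, rfl⟩ := Finset.mem_image.mp hb
    exact h x hx
  have h3 : ∑ b ∈ s.image f, (s.filter (fun y => f y = b)).card = ∑ b ∈ s.image f, d := by
    refine le_antisymm (Finset.sum_le_sum h2) ?_
    rw [← h1, Finset.sum_const, smul_eq_mul, mul_comm]; exact heq
  have h4 := (Finset.sum_eq_sum_iff_of_le h2).mp h3
  intro x hx
  exact h4 _ (Finset.mem_image_of_mem f hx)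

lemma fiber_le {α β : Type*} [DecidableEq β] (s : Finset α) (f : α → β) (d : ℕ)
    (h : ∀ x ∈ s, (s.filter (fun y => f y = f x)).card ≤ d) :
    s.card ≤ d * (s.image f).card := by
  refine Finset.card_le_mul_card_image s d ?_
  intro b hb
  obtain ⟨x, hx, rfl⟩ := Finset.mem_image.mp hb
  exact h x hx

lemma cong2 (hB : IsLeech B) {x y : LV} (h : resid 2 x = resid 2 y)
    (hx : pairZ B x x ≤ 8) (hy : pairZ B y y ≤ 8) :
    x = y ∨ x = -y ∨ (pairZ B x x = 8 ∧ pairZ B y y = 8 ∧ pairZ B x y = 0) := by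
  obtain ⟨w, hw⟩ := (resid_eq_iff 2 x y).mp h
  by_cases h1 : w = 0
  · left
    subst h1
    exact sub_eq_zero.mp (by simpa using hw)
  by_cases h2 : y + w = 0
  · right; left
    have : w = -y := eq_neg_of_add_eq_zero_right h2
    rw [this] at hw
    ext i
    have := congrFun hw i
    simp at this ⊢
    omega
  right; right
  have e1 := N_sub hB x y
  have e2 := N_add hB x y
  have hw2 : x + y = (2 : ℤ) • (y + w) := by
    ext i
    have := congrFun hw i
    simp at this ⊢
    omega
  rw [hw, N_smul] at e1
  rw [hw2, N_smul] at e2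
  have g1 := N_ge_four hB h1
  have g2 := N_ge_four hB h2
  push_cast at e1
  refine ⟨by omega, by omega, by omega⟩

lemma filt2_small (hB : IsLeech B) (S : Finset LV) (hS : ∀ v ∈ S, pairZ B v v < 8) :
    ∀ x ∈ S, (S.filter (fun y => resid 2 y = resid 2 x)).card ≤ 2 := by
  intro x hx
  refine le_trans (Finset.card_le_card (t := {x, -x}) ?_) Finset.card_le_two
  intro y hy
  rw [Finset.mem_filter] at hy
  rcases cong2 hB hy.2 (hS y hy.1).le (hS x hx).le with h | h | h
  · simp [h]
  · simp [h]
  · have := hS y hy.1; omega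

lemma frame8 (hB : IsLeech B) (F : Finset LV) (hF : ∀ v ∈ F, pairZ B v v = 8)
    (ho : ∀ v ∈ F, ∀ u ∈ F, u = v ∨ u = -v ∨ pairZ B v u = 0) :
    F.card ≤ 48 ∧ (F.card = 48 → ∀ x, ∑ g ∈ F, pairZ B x g ^ 2 = 16 * pairZ B x x) := by
  have row : ∀ v ∈ F, ∑ u ∈ F, pairZ B v u ^ 2 ≤ 128 := by
    intro v hv
    have h1 : ∀ u ∈ F, pairZ B v u ^ 2 ≤ (if u = v then 64 else 0) + (if u = -v then 64 else 0) := by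
      intro u hu
      rcases ho v hv u hu with h | h | h
      · subst h; rw [hF _ hv]; simp; split_ifs <;> norm_num
      · subst h; rw [pz_neg_right, hF _ hv]; simp; split_ifs <;> norm_num
      · rw [h]; split_ifs <;> norm_num
    refine (Finset.sum_le_sum h1).trans ?_
    rw [Finset.sum_add_distrib, Finset.sum_ite_eq', Finset.sum_ite_eq']
    split_ifs <;> norm_num
  have hs1 : ∑ v ∈ F, pairZ B v v = 8 * F.card := by
    rw [Finset.sum_congr rfl hF]; simp [mul_comm]
  have hs2 : ∑ v ∈ F, ∑ u ∈ F, pairZ B v u ^ 2 ≤ 128 * F.card := by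
    refine (Finset.sum_le_sum row).trans ?_
    simp [mul_comm]
  have hf := frame_le hB F
  rw [hs1] at hf
  constructor
  · have h1 := hf.1
    by_contra hc
    push Not at hc
    have hc' : (49 : ℤ) ≤ F.card := by exact_mod_cast hc
    nlinarith
  · intro hc x
    rw [hc] at hf hs2
    have := hf.2 (le_antisymm hf.1 (by push_cast at *; linarith)) x
    push_cast at this
    linarith

lemma mod2_main (hB : IsLeech B) {O2 O3 O4 : Finset LV} (h2 : IsOrb B O2 2) (h3 : IsOrb B O3 3)
    (h4 : IsOrb B O4 4) (c2 : O2.card = 3 * 65520) (c3 : O3.card = 256 * 65520)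
    (c4 : O4.card = 6075 * 65520) :
    (∀ x, pairZ B x x = 4 → x ∈ O2) ∧
    (∀ f ∈ O4, (O4.filter (fun y => resid 2 y = resid 2 f)).card = 48 ∧
      (∀ u ∈ O4.filter (fun y => resid 2 y = resid 2 f), u = f ∨ u = -f ∨ pairZ B f u = 0) ∧
      ∀ x, ∑ g ∈ O4.filter (fun y => resid 2 y = resid 2 f), pairZ B x g ^ 2
        = 16 * pairZ B x x) := by
  classical
  have n3 : ∀ v ∈ O3, pairZ B v v = 6 := fun v hv => by rw [h3.norm v hv]; norm_num
  have n4 : ∀ v ∈ O4, pairZ B v v = 8 := fun v hv => by rw [h4.norm v hv]; norm_num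
  have f3 := fiber_le O3 (resid 2) 2 (filt2_small hB O3 (fun v hv => by rw [n3 v hv]; norm_num))
  have hor : ∀ f ∈ O4, ∀ v ∈ O4.filter (fun y => resid 2 y = resid 2 f),
      ∀ u ∈ O4.filter (fun y => resid 2 y = resid 2 f), u = v ∨ u = -v ∨ pairZ B v u = 0 := by
    intro f hf v hv u hu
    rw [Finset.mem_filter] at hv hu
    rcases cong2 hB (hu.2.trans hv.2.symm) (n4 u hu.1).le (n4 v hv.1).le with h | h | h
    · exact Or.inl h
    · exact Or.inr (Or.inl h)
    · exact Or.inr (Or.inr (by rw [pz_comm hB]; exact h.2.2))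
  have fr : ∀ f ∈ O4, _ := fun f hf => frame8 hB (O4.filter (fun y => resid 2 y = resid 2 f))
    (fun v hv => n4 v (Finset.mem_filter.mp hv).1) (hor f hf)
  have f4 := fiber_le O4 (resid 2) 48 (fun f hf => (fr f hf).1)
  have key : ∀ S : Finset LV, (∀ v ∈ S, pairZ B v v = 4) →
      1 + (S.image (resid 2)).card + (O3.image (resid 2)).card + (O4.image (resid 2)).card
        ≤ 2 ^ 24 := by
    intro S hS
    have dis : ∀ x y : LV, pairZ B x x < pairZ B y y → pairZ B y y ≤ 8 →
        resid 2 x = resid 2 y → False := by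
      intro x y hxy hy h
      rcases cong2 hB h (by omega) hy with h | h | h
      · subst h; omega
      · subst h; rw [N_neg] at hxy; omega
      · omega
    have d1 : Disjoint ({resid 2 (0 : LV)} : Finset (Fin 24 → ZMod 2)) (S.image (resid 2)) := by
      rw [Finset.disjoint_left]
      intro a ha hb
      rw [Finset.mem_singleton] at ha
      obtain ⟨y, hy, hy2⟩ := Finset.mem_image.mp hb
      exact dis 0 y (by rw [hS y hy, pz_zero_left]; norm_num) (by rw [hS y hy]; norm_num)
        (by rw [hy2, ha])
    have d2 : Disjoint (({resid 2 (0 : LV)} : Finset (Fin 24 → ZMod 2)) ∪ (S.image (resid 2)))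
        (O3.image (resid 2)) := by
      rw [Finset.disjoint_left]
      intro a ha hb
      obtain ⟨y, hy, hy2⟩ := Finset.mem_image.mp hb
      rw [Finset.mem_union, Finset.mem_singleton, Finset.mem_image] at ha
      rcases ha with ha | ⟨x, hx, hx2⟩
      · exact dis 0 y (by rw [n3 y hy, pz_zero_left]; norm_num) (by rw [n3 y hy]; norm_num)
          (by rw [hy2, ha])
      · exact dis x y (by rw [n3 y hy, hS x hx]; norm_num) (by rw [n3 y hy]; norm_num)
          (by rw [hy2, hx2])
    have d3 : Disjoint ((({resid 2 (0 : LV)} : Finset (Fin 24 → ZMod 2)) ∪ (S.image (resid 2)))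
        ∪ (O3.image (resid 2))) (O4.image (resid 2)) := by
      rw [Finset.disjoint_left]
      intro a ha hb
      obtain ⟨y, hy, hy2⟩ := Finset.mem_image.mp hb
      rw [Finset.mem_union, Finset.mem_union, Finset.mem_singleton, Finset.mem_image,
        Finset.mem_image] at ha
      rcases ha with (ha | ⟨x, hx, hx2⟩) | ⟨x, hx, hx2⟩
      · exact dis 0 y (by rw [n4 y hy, pz_zero_left]; norm_num) (by rw [n4 y hy])
          (by rw [hy2, ha])
      · exact dis x y (by rw [n4 y hy, hS x hx]; norm_num) (by rw [n4 y hy])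
          (by rw [hy2, hx2])
      · exact dis x y (by rw [n4 y hy, n3 x hx]; norm_num) (by rw [n4 y hy])
          (by rw [hy2, hx2])
    have e : 1 + (S.image (resid 2)).card + (O3.image (resid 2)).card + (O4.image (resid 2)).card
        = ((({resid 2 (0 : LV)} ∪ (S.image (resid 2))) ∪ (O3.image (resid 2))) ∪
          (O4.image (resid 2))).card := by
      rw [Finset.card_union_of_disjoint d3, Finset.card_union_of_disjoint d2,
        Finset.card_union_of_disjoint d1, Finset.card_singleton]
    rw [e]
    refine (Finset.card_le_univ _).trans ?_
    simp [ZMod.card]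
  have n2 : ∀ v ∈ O2, pairZ B v v = 4 := fun v hv => by rw [h2.norm v hv]; norm_num
  have kS : ∀ S : Finset LV, (∀ v ∈ S, pairZ B v v = 4) → S.card ≤ 2 * (S.image (resid 2)).card :=
    fun S hS => fiber_le S (resid 2) 2 (filt2_small hB S (fun v hv => by rw [hS v hv]; norm_num))
  constructor
  · intro x hx
    by_contra hn
    have hS : ∀ v ∈ insert x O2, pairZ B v v = 4 := by
      intro v hv
      rcases Finset.mem_insert.mp hv with h | h
      · rw [h, hx]
      · exact n2 v h
    have k1 := key _ hS
    have k2 := kS _ hS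
    rw [Finset.card_insert_of_notMem hn] at k2
    omega
  · have k1 := key _ n2
    have k2 := kS _ n2
    have ft := fiber_tight O4 (resid 2) 48 (fun f hf => (fr f hf).1) (by omega)
    intro f hf
    exact ⟨ft f hf, hor f hf f (by simp [hf]), (fr f hf).2 (ft f hf)⟩

end LeechAux

section LeechAux

variable {B : Matrix (Fin 24) (Fin 24) ℤ}

lemma mom4 (hB : IsLeech B) {O O4 : Finset LV} {a : ℤ} (hO : IsOrb B O a) (h4 : IsOrb B O4 4)
    (hfr : ∀ f ∈ O4, (O4.filter (fun y => resid 2 y = resid 2 f)).card = 48 ∧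
      ∀ x, ∑ g ∈ O4.filter (fun y => resid 2 y = resid 2 f), pairZ B x g ^ 2 = 16 * pairZ B x x) :
    ∀ f ∈ O4, 3 * ∑ v ∈ O, pairZ B f v ^ 2 = 2 * a * O.card := by
  intro f hf
  have inv : ∀ s ∈ ConwayGroup B, ∀ v u, pairZ B (s.mulVec v) (s.mulVec u) ^ 2 = pairZ B v u ^ 2 :=
    fun s hs v u => by rw [cg_pair hs]
  have hc := orb_const h4 (fun f => ∑ v ∈ O, pairZ B f v ^ 2)
    (orb_sum_inv hO (fun f v => pairZ B f v ^ 2) inv)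
  have e1 : ∑ g ∈ O4.filter (fun y => resid 2 y = resid 2 f), ∑ v ∈ O, pairZ B g v ^ 2
      = 48 * ∑ v ∈ O, pairZ B f v ^ 2 := by
    rw [Finset.sum_congr rfl (fun g hg => hc g (Finset.mem_filter.mp hg).1 f hf),
      Finset.sum_const, (hfr f hf).1]
    simp
  have e2 : ∑ g ∈ O4.filter (fun y => resid 2 y = resid 2 f), ∑ v ∈ O, pairZ B g v ^ 2
      = 32 * a * O.card := by
    rw [Finset.sum_comm]
    have : ∀ v ∈ O, ∑ g ∈ O4.filter (fun y => resid 2 y = resid 2 f), pairZ B g v ^ 2 = 32 * a := by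
      intro v hv
      simp only [pz_comm hB _ v]
      rw [(hfr f hf).2 v, hO.norm v hv]; ring
    rw [Finset.sum_congr rfl this]; simp [mul_comm]
  linarith

lemma mom3 (hB : IsLeech B) {O2 O3 O4 : Finset LV} (h2 : IsOrb B O2 2) (h3 : IsOrb B O3 3)
    (h4 : IsOrb B O4 4) (c2 : O2.card = 3 * 65520) (c3 : O3.card = 256 * 65520)
    (hL : ∀ x, pairZ B x x = 4 → x ∈ O2)
    (hfr : ∀ f ∈ O4, (O4.filter (fun y => resid 2 y = resid 2 f)).card = 48 ∧
      (∀ u ∈ O4.filter (fun y => resid 2 y = resid 2 f), u = f ∨ u = -f ∨ pairZ B f u = 0) ∧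
      ∀ x, ∑ g ∈ O4.filter (fun y => resid 2 y = resid 2 f), pairZ B x g ^ 2 = 16 * pairZ B x x) :
    ∀ v ∈ O3, ∑ w ∈ O2, pairZ B v w ^ 2 = 196560 := by
  have hm := mom4 hB h3 h4 (fun f hf => ⟨(hfr f hf).1, (hfr f hf).2.2⟩)
  obtain ⟨f, hf⟩ := h4.ne
  obtain ⟨g, hg, hgf⟩ : ∃ g ∈ O4.filter (fun y => resid 2 y = resid 2 f), g ∉ ({f, -f} : Finset LV) := by
    by_contra hcon
    push Not at hcon
    have hsub : O4.filter (fun y => resid 2 y = resid 2 f) ⊆ ({f, -f} : Finset LV) := hcon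
    have := (Finset.card_le_card hsub).trans (Finset.card_le_two (a := f) (b := -f))
    rw [(hfr f hf).1] at this
    omega
  have hip : pairZ B f g = 0 := by
    rcases (hfr f hf).2.1 g hg with h | h | h
    · simp [h] at hgf
    · simp [h] at hgf
    · exact h
  rw [Finset.mem_filter] at hg
  obtain ⟨b, hb⟩ := (resid_eq_iff 2 f g).mp hg.2.symm
  push_cast at hb
  have ha : f + g = (2 : ℤ) • (b + g) := by
    rw [smul_add, ← hb, two_smul]; abel
  have hNf : pairZ B f f = 8 := by rw [h4.norm f hf]; norm_num
  have hNg : pairZ B g g = 8 := by rw [h4.norm g hg.1]; norm_num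
  have hNb : b ∈ O2 := by
    apply hL
    have := N_sub hB f g
    rw [hb, N_smul] at this; linarith
  have hNa : b + g ∈ O2 := by
    apply hL
    have := N_add hB f g
    rw [ha, N_smul] at this; linarith
  have inv : ∀ s ∈ ConwayGroup B, ∀ v u, pairZ B (s.mulVec v) (s.mulVec u) ^ 2 = pairZ B v u ^ 2 :=
    fun s hs v u => by rw [cg_pair hs]
  have hc := orb_const h2 (fun f => ∑ v ∈ O3, pairZ B f v ^ 2)
    (orb_sum_inv h3 (fun f v => pairZ B f v ^ 2) inv) _ hNa _ hNb
  have para : ∑ v ∈ O3, pairZ B (f + g) v ^ 2 + ∑ v ∈ O3, pairZ B (f - g) v ^ 2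
      = 2 * ∑ v ∈ O3, pairZ B f v ^ 2 + 2 * ∑ v ∈ O3, pairZ B g v ^ 2 := by
    rw [Finset.mul_sum, Finset.mul_sum, ← Finset.sum_add_distrib, ← Finset.sum_add_distrib]
    refine Finset.sum_congr rfl fun v _ => ?_
    rw [pz_add_left, pz_sub_left]; ring
  rw [ha, hb] at para
  simp only [pz_smul_left, mul_pow, ← Finset.mul_sum] at para
  have m1 := hm f hf
  have m2 := hm g hg.1
  rw [c3] at m1 m2
  intro v hv
  have dd := orb_double h2 h3 (fun f v => pairZ B f v ^ 2) inv hNb hv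
  simp only [pz_comm hB _ v] at dd
  have e : ∑ x ∈ O3, pairZ B b x ^ 2 = 256 * 65520 := by
    push_cast at *; linarith
  rw [c2, c3, e] at dd
  push_cast at dd
  linarith

/-- number of minimal vectors with given inner product -/
def cnt (B : Matrix (Fin 24) (Fin 24) ℤ) (L : Finset LV) (x : LV) (c : ℤ) : ℕ :=
  (L.filter (fun w => pairZ B x w = c)).card

lemma cnt_neg {L : Finset LV} (hneg : ∀ w ∈ L, -w ∈ L) (x : LV) (c : ℤ) :
    cnt B L x (-c) = cnt B L x c := by
  unfold cnt
  refine Finset.card_bij (fun w _ => -w) ?_ ?_ ?_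
  · intro w hw
    rw [Finset.mem_filter] at hw ⊢
    exact ⟨hneg w hw.1, by rw [pz_neg_right, hw.2]; ring⟩
  · intro a _ b _ h; exact neg_injective h
  · intro b hb
    rw [Finset.mem_filter] at hb
    refine ⟨-b, ?_, by simp⟩
    rw [Finset.mem_filter]
    exact ⟨hneg b hb.1, by rw [pz_neg_right, hb.2]⟩

lemma cnt_bound {L : Finset LV} (hneg : ∀ w ∈ L, -w ∈ L) (x : LV) {c : ℤ} (hc : c ≠ 0) :
    2 * c ^ 2 * cnt B L x c ≤ ∑ w ∈ L, pairZ B x w ^ 2 ∧ 2 * cnt B L x c ≤ L.card := by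
  classical
  have hd : Disjoint (L.filter (fun w => pairZ B x w = c)) (L.filter (fun w => pairZ B x w = -c)) := by
    rw [Finset.disjoint_left]
    intro a ha hb
    rw [Finset.mem_filter] at ha hb
    have := ha.2.symm.trans hb.2
    omega
  have hn := cnt_neg (B := B) hneg x c
  have hsub : L.filter (fun w => pairZ B x w = c) ∪ L.filter (fun w => pairZ B x w = -c) ⊆ L := by
    intro a ha
    rcases Finset.mem_union.mp ha with h | h <;> exact (Finset.mem_filter.mp h).1
  constructor
  · have h1 := Finset.sum_le_sum_of_subset_of_nonneg (f := fun w => pairZ B x w ^ 2) hsub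
      (fun _ _ _ => sq_nonneg _)
    rw [Finset.sum_union hd] at h1
    have e1 : ∑ w ∈ L.filter (fun w => pairZ B x w = c), pairZ B x w ^ 2 = c ^ 2 * cnt B L x c := by
      rw [Finset.sum_congr rfl (fun w hw => by rw [(Finset.mem_filter.mp hw).2])]
      simp [cnt, mul_comm]
    have e2 : ∑ w ∈ L.filter (fun w => pairZ B x w = -c), pairZ B x w ^ 2 = c ^ 2 * cnt B L x c := by
      rw [Finset.sum_congr rfl (fun w hw => by rw [(Finset.mem_filter.mp hw).2]), ← hn]
      simp [cnt, mul_comm]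
    rw [e1, e2] at h1
    linarith
  · have h1 := Finset.card_le_card hsub
    rw [Finset.card_union_of_disjoint hd] at h1
    unfold cnt at hn ⊢
    omega

end LeechAux

section LeechAux

variable {B : Matrix (Fin 24) (Fin 24) ℤ}

/-- the arithmetic attached to two congruent vectors -/
lemma cong3 (hB : IsLeech B) {v u : LV} {a b : ℤ} (hv : pairZ B v v = 2 * a)
    (hu : pairZ B u u = 2 * b) (h : resid 3 v = resid 3 u) (hne : v ≠ u) :
    ∃ (w : LV) (t x : ℤ), u = v - (3 : ℤ) • w ∧ pairZ B w w = 2 * t ∧ pairZ B v w = x ∧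
      2 ≤ t ∧ 9 * t ≤ 2 * (a + b) ∧ pairZ B v u = a + b - 9 * t ∧ 3 * x = a - b + 9 * t ∧
      (a + b - 9 * t) ^ 2 ≤ 4 * a * b ∧
      pairZ B (v - w) (v - w) = 2 * a + 2 * t - 2 * x ∧
      (v = w ∨ 4 ≤ 2 * a + 2 * t - 2 * x) := by
  obtain ⟨w, hw⟩ := (resid_eq_iff 3 v u).mp h
  push_cast at hw
  have hw0 : w ≠ 0 := by
    rintro rfl
    rw [smul_zero] at hw
    exact hne (sub_eq_zero.mp hw)
  obtain ⟨t, ht⟩ := hB.2.2.2.1 w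
  have ht2 : pairZ B w w = 2 * t := by rw [ht]; ring
  have g4 := N_ge_four hB hw0
  have hu' : u = v - (3 : ℤ) • w := by rw [← hw]; abel
  have e1 := N_sub hB v u
  rw [hw, N_smul] at e1
  have e2 := N_sub hB v ((3 : ℤ) • w)
  rw [← hu', N_smul, pz_smul_right] at e2
  have e3 := N_sub hB v w
  have e4 := N_add hB v u
  have e5 := N_nonneg hB (v + u)
  have cs := pz_cs hB v u
  have hvu : pairZ B v u = a + b - 9 * t := by linarith
  refine ⟨w, t, pairZ B v w, hu', ht2, rfl, by omega, by omega, hvu, by omega, ?_, by omega, ?_⟩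
  · rw [hvu, hv, hu] at cs; linarith
  · by_cases hvw : v = w
    · exact Or.inl hvw
    · right
      have := N_ge_four hB (sub_ne_zero.mpr hvw)
      omega

lemma noconj (hB : IsLeech B) {v u : LV} {a b : ℤ} (hv : pairZ B v v = 2 * a)
    (hu : pairZ B u u = 2 * b) (h : resid 3 v = resid 3 u) (hne : v ≠ u)
    (hab : (a = 2 ∧ b = 2) ∨ (a = 3 ∧ b = 3) ∨ (a = 4 ∧ b = 4) ∨ (a = 5 ∧ b = 5) ∨
      (a = 2 ∧ b = 5) ∨ (a = 3 ∧ b = 6) ∨ (a = 3 ∧ b = 9) ∨ (a = 4 ∧ b = 7) ∨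
      (a = 2 ∧ b = 11)) : False := by
  obtain ⟨w, t, x, h1, h2, h3, h4, h5, h6, h7, h8, h9, h10⟩ := cong3 hB hv hu h hne
  have hvw : v = w → a = t ∧ x = 2 * t := by
    rintro rfl; omega
  rcases hab with ⟨rfl, rfl⟩ | ⟨rfl, rfl⟩ | ⟨rfl, rfl⟩ | ⟨rfl, rfl⟩ | ⟨rfl, rfl⟩ | ⟨rfl, rfl⟩ |
    ⟨rfl, rfl⟩ | ⟨rfl, rfl⟩ | ⟨rfl, rfl⟩ <;>
  · obtain rfl : t = 2 := by omega
    rcases h10 with h10 | h10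
    · have := hvw h10
      first | omega | (norm_num at h8)
    · first | omega | (norm_num at h8)

/-- types modulo three -/
lemma type_mod (hB : IsLeech B) {v u : LV} {a b : ℤ} (hv : pairZ B v v = 2 * a)
    (hu : pairZ B u u = 2 * b) (h : resid 3 v = resid 3 u) : (3 : ℤ) ∣ a - b := by
  by_cases hne : v = u
  · subst hne
    have : a = b := by omega
    simp [this]
  · obtain ⟨w, t, x, h1, h2, h3, h4, h5, h6, h7, h8, h9, h10⟩ := cong3 hB hv hu h hne
    omega

lemma no_zero (hB : IsLeech B) {v : LV} {a : ℤ} (hv : pairZ B v v = 2 * a)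
    (h : resid 3 v = resid 3 (0 : LV)) (h0 : 0 < a) (h18 : a < 18) : False := by
  obtain ⟨w, hw⟩ := (resid_eq_iff 3 v 0).mp h
  rw [sub_zero] at hw
  have hw0 : w ≠ 0 := by
    rintro rfl
    rw [smul_zero] at hw; rw [hw, pz_zero_left] at hv; omega
  have := N_ge_four hB hw0
  rw [hw, N_smul] at hv
  push_cast at hv
  omega

lemma conj_2_8 (hB : IsLeech B) {v u : LV} (hv : pairZ B v v = 4)
    (hu : pairZ B u u = 16) (h : resid 3 v = resid 3 u) : u = -(2 : ℤ) • v := by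
  have hne : v ≠ u := by rintro rfl; omega
  obtain ⟨w, t, x, h1, h2, h3, h4, h5, h6, h7, h8, h9, h10⟩ :=
    cong3 (a := 2) (b := 8) hB (by omega) (by omega) h hne
  obtain rfl : t = 2 := by omega
  have : v = w := by
    rcases h10 with h | h
    · exact h
    · omega
  rw [h1, ← this]
  module

lemma conj_5_8 (hB : IsLeech B) {v u : LV} (hv : pairZ B v v = 10)
    (hu : pairZ B u u = 16) (h : resid 3 v = resid 3 u) :
    ∃ w w' : LV, pairZ B w w = 4 ∧ pairZ B w' w' = 4 ∧ u = w' + (-2 : ℤ) • w := by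
  have hne : v ≠ u := by rintro rfl; omega
  obtain ⟨w, t, x, h1, h2, h3, h4, h5, h6, h7, h8, h9, h10⟩ :=
    cong3 (a := 5) (b := 8) hB (by omega) (by omega) h hne
  obtain rfl : t = 2 := by omega
  refine ⟨w, v - w, by omega, by omega, ?_⟩
  rw [h1]; module

lemma conj_6_6 (hB : IsLeech B) {v u : LV} (hv : pairZ B v v = 12)
    (hu : pairZ B u u = 12) (h : resid 3 v = resid 3 u) (hne : v ≠ u) :
    pairZ B v u = -6 ∧ ∃ w w' : LV, pairZ B w w = 4 ∧ pairZ B w' w' = 4 ∧ pairZ B w w' = 2 ∧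
      v = w + w' := by
  obtain ⟨w, t, x, h1, h2, h3, h4, h5, h6, h7, h8, h9, h10⟩ :=
    cong3 (a := 6) (b := 6) hB (by omega) (by omega) h hne
  obtain rfl : t = 2 := by omega
  refine ⟨by omega, w, v - w, by omega, by omega, ?_, by abel⟩
  rw [pz_sub_right, pz_comm hB w v]; omega

lemma conj_7_7 (hB : IsLeech B) {v u : LV} (hv : pairZ B v v = 14)
    (hu : pairZ B u u = 14) (h : resid 3 v = resid 3 u) (hne : v ≠ u) :
    pairZ B v u = -4 := by
  obtain ⟨w, t, x, h1, h2, h3, h4, h5, h6, h7, h8, h9, h10⟩ :=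
    cong3 (a := 7) (b := 7) hB (by omega) (by omega) h hne
  have hvw : v = w → 7 = t := by
    rintro rfl; omega
  rcases h10 with h10 | h10
  · have := hvw h10; omega
  · omega

lemma conj_8_8 (hB : IsLeech B) {v u : LV} (hv : pairZ B v v = 16)
    (hu : pairZ B u u = 16) (h : resid 3 v = resid 3 u) (hne : v ≠ u) :
    pairZ B v u = -2 ∨ ∃ w w' : LV, pairZ B w w = 4 ∧ pairZ B w' w' = 4 ∧
      v = w' + (-2 : ℤ) • w := by
  obtain ⟨w, t, x, h1, h2, h3, h4, h5, h6, h7, h8, h9, h10⟩ :=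
    cong3 (a := 8) (b := 8) hB (by omega) (by omega) h hne
  have : t = 2 ∨ t = 3 := by omega
  rcases this with rfl | rfl
  · left; omega
  · right
    refine conj_5_8 hB (v := -(v + u)) ?_ hv ?_
    · rw [N_neg, N_add hB]; omega
    · rw [resid_eq_iff]
      refine ⟨w - v, ?_⟩
      rw [h1]; push_cast; module

lemma conj_6_9 (hB : IsLeech B) {v u : LV} (hv : pairZ B v v = 12)
    (hu : pairZ B u u = 18) (h : resid 3 v = resid 3 u) :
    ∃ w : LV, pairZ B w w = 4 ∧ pairZ B v w = 5 ∧ u = v - (3 : ℤ) • w := by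
  have hne : v ≠ u := by rintro rfl; omega
  obtain ⟨w, t, x, h1, h2, h3, h4, h5, h6, h7, h8, h9, h10⟩ :=
    cong3 (a := 6) (b := 9) hB (by omega) (by omega) h hne
  have hvw : v = w → 6 = t := by
    rintro rfl; omega
  have : t = 2 := by
    rcases h10 with h10 | h10
    · have := hvw h10; omega
    · omega
  subst this
  exact ⟨w, by omega, by omega, h1⟩

lemma conj_9_9 (hB : IsLeech B) {v u : LV} (hv : pairZ B v v = 18)
    (hu : pairZ B u u = 18) (h : resid 3 v = resid 3 u) (hne : v ≠ u) :
    pairZ B v u = 0 ∨ pairZ B v u = -9 := by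
  obtain ⟨w, t, x, h1, h2, h3, h4, h5, h6, h7, h8, h9, h10⟩ :=
    cong3 (a := 9) (b := 9) hB (by omega) (by omega) h hne
  have hvw : v = w → 9 = t := by
    rintro rfl; omega
  rcases h10 with h10 | h10
  · have := hvw h10; omega
  · omega

lemma N_sum (S : Finset LV) : pairZ B (∑ v ∈ S, v) (∑ v ∈ S, v) = ∑ v ∈ S, ∑ u ∈ S, pairZ B v u := by
  rw [pz_sum_left]
  exact Finset.sum_congr rfl fun v _ => pz_sum_right _ _ _

/-- simplex bound -/
lemma simplex (hB : IsLeech B) {S : Finset LV} (f : LV → LV) {m k : ℤ}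
    (hN : ∀ v ∈ S, pairZ B (f v) (f v) = m)
    (ho : ∀ v ∈ S, ∀ u ∈ S, v ≠ u → pairZ B (f v) (f u) ≤ -k) (hS : S.Nonempty) :
    k * (S.card - 1) ≤ m := by
  have h0 := N_nonneg hB (∑ v ∈ S, f v)
  rw [pz_sum_left] at h0
  have row : ∀ v ∈ S, pairZ B (f v) (∑ u ∈ S, f u) ≤ m - k * (S.card - 1) := by
    intro v hv
    rw [pz_sum_right, ← Finset.add_sum_erase S _ hv, hN v hv]
    have : ∑ u ∈ S.erase v, pairZ B (f v) (f u) ≤ ∑ u ∈ S.erase v, (-k) :=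
      Finset.sum_le_sum fun u hu => ho v hv u (Finset.mem_of_mem_erase hu) (Finset.ne_of_mem_erase hu).symm
    rw [Finset.sum_const, Finset.card_erase_of_mem hv, nsmul_eq_mul, Nat.cast_sub hS.card_pos] at this
    push_cast at this
    linarith
  have := Finset.sum_le_sum row
  rw [Finset.sum_const, nsmul_eq_mul] at this
  have hp : (0 : ℤ) < S.card := by exact_mod_cast hS.card_pos
  have h1 : 0 ≤ (S.card : ℤ) * (m - k * (S.card - 1)) := by linarith
  have := nonneg_of_mul_nonneg_right h1 hp
  linarith

/-- at most 24 minimal vectors have inner product 5 with a type 6 vector -/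
lemma cnt_five (hB : IsLeech B) {L : Finset LV} (hL : ∀ w ∈ L, pairZ B w w = 4) {v : LV}
    (hv : pairZ B v v = 12) : cnt B L v 5 ≤ 24 := by
  unfold cnt
  by_cases hS : (L.filter (fun w => pairZ B v w = 5)).Nonempty
  · have := simplex hB (fun w => (12 : ℤ) • w - (5 : ℤ) • v) (m := 276) (k := 12)
      ?_ ?_ hS
    · omega
    · intro w hw
      rw [Finset.mem_filter] at hw
      have := hL w hw.1
      rw [N_sub hB, N_smul, N_smul, pz_smul_left, pz_smul_right, pz_comm hB w v, hw.2, this, hv]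
      norm_num
    · intro w hw w' hw' hne
      rw [Finset.mem_filter] at hw hw'
      have a1 := hL w hw.1
      have a2 := hL w' hw'.1
      have a3 := N_ge_four hB (sub_ne_zero.mpr hne)
      rw [N_sub hB] at a3
      simp only [pz_sub_left, pz_sub_right, pz_smul_left, pz_smul_right]
      rw [pz_comm hB w v, hw.2, hw'.2, hv]
      omega
  · rw [Finset.not_nonempty_iff_eq_empty] at hS
    rw [hS]; simp

end LeechAux

section LeechAux

variable {B : Matrix (Fin 24) (Fin 24) ℤ}

lemma cg_N {s : Matrix (Fin 24) (Fin 24) ℤ} (hs : s ∈ ConwayGroup B) {x y : LV} {c : ℤ}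
    (h : pairZ B x y = c) : pairZ B (s.mulVec x) (s.mulVec y) = c := by
  rw [cg_pair hs, h]

lemma orb_card_sq {O L : Finset LV} {a c : ℤ} (hO : IsOrb B O a)
    (hL : ∀ x, x ∈ L ↔ pairZ B x x = 4)
    (h : ∃ v ∈ O, ∃ w w' : LV, pairZ B w w = 4 ∧ pairZ B w' w' = 4 ∧ v = w' + c • w) :
    O.card ≤ L.card * L.card := by
  classical
  obtain ⟨v, hv, w, w', hw, hw', rfl⟩ := h
  rw [← Finset.card_product]
  refine (Finset.card_le_card (t := (L ×ˢ L).image (fun p => p.1 + c • p.2)) ?_).trans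
    Finset.card_image_le
  intro u hu
  obtain ⟨s, hs, rfl⟩ := hO.trans _ hv u hu
  rw [Finset.mem_image]
  refine ⟨(s.mulVec w', s.mulVec w), ?_, ?_⟩
  · rw [Finset.mem_product, hL, hL]
    exact ⟨cg_N hs hw', cg_N hs hw⟩
  · rw [Matrix.mulVec_add, Matrix.mulVec_smul]

lemma orb_card_half {O L : Finset LV} {a : ℤ} (hO : IsOrb B O a)
    (hL : ∀ x, x ∈ L ↔ pairZ B x x = 4)
    (h : ∃ v ∈ O, ∃ w w' : LV, pairZ B w w = 4 ∧ pairZ B w' w' = 4 ∧ pairZ B w w' = 2 ∧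
      v = w + w') :
    2 * O.card ≤ L.card * L.card := by
  classical
  obtain ⟨v, hv, w, w', hw, hw', hww, rfl⟩ := h
  have h1 : O ⊆ L.biUnion (fun y => (L.filter (fun z => pairZ B y z = 2)).image (fun z => y + z)) := by
    intro u hu
    obtain ⟨s, hs, rfl⟩ := hO.trans _ hv u hu
    rw [Finset.mem_biUnion]
    refine ⟨s.mulVec w, (hL _).mpr (cg_N hs hw), ?_⟩
    rw [Finset.mem_image]
    refine ⟨s.mulVec w', ?_, by rw [Matrix.mulVec_add]⟩
    rw [Finset.mem_filter]
    exact ⟨(hL _).mpr (cg_N hs hw'), cg_N hs hww⟩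
  have h2 := (Finset.card_le_card h1).trans Finset.card_biUnion_le
  have hneg : ∀ w ∈ L, -w ∈ L := fun w hw => by
    rw [hL] at hw ⊢; rw [N_neg, hw]
  have h3 : ∑ y ∈ L, 2 * ((L.filter (fun z => pairZ B y z = 2)).image (fun z => y + z)).card
      ≤ ∑ y ∈ L, L.card := by
    refine Finset.sum_le_sum fun y _ => ?_
    have := (cnt_bound (B := B) hneg y (c := 2) (by norm_num)).2
    unfold cnt at this
    exact (Nat.mul_le_mul_left 2 Finset.card_image_le).trans this
  rw [← Finset.mul_sum, Finset.sum_const, smul_eq_mul] at h3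
  omega

lemma fib_one {S : Finset LV} (h : ∀ v ∈ S, ∀ u ∈ S, resid 3 v = resid 3 u → v = u) :
    ∀ x ∈ S, (S.filter (fun y => resid 3 y = resid 3 x)).card ≤ 1 := by
  intro x hx
  rw [Finset.card_le_one]
  intro v hv u hu
  rw [Finset.mem_filter] at hv hu
  exact h v hv.1 u hu.1 (hv.2.trans hu.2.symm)

lemma fib_simplex (hB : IsLeech B) {S : Finset LV} {m k : ℤ} (n : ℕ)
    (hN : ∀ v ∈ S, pairZ B v v = m)
    (h : ∀ v ∈ S, ∀ u ∈ S, resid 3 v = resid 3 u → v ≠ u → pairZ B v u = -k)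
    (hk : 0 < k) (hn : m < k * n) :
    ∀ x ∈ S, (S.filter (fun y => resid 3 y = resid 3 x)).card ≤ n := by
  intro x hx
  have := simplex hB (S := S.filter (fun y => resid 3 y = resid 3 x)) (fun v => v) (m := m) (k := k)
    (fun v hv => hN v (Finset.mem_filter.mp hv).1) ?_ ⟨x, by simp [hx]⟩
  · have h2 : k * (((S.filter (fun y => resid 3 y = resid 3 x)).card : ℤ) - 1) < k * n := by omega
    have := lt_of_mul_lt_mul_left h2 hk.le
    omega
  · intro v hv u hu hne
    rw [Finset.mem_filter] at hv hu
    exact (h v hv.1 u hu.1 (hv.2.trans hu.2.symm) hne).le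

lemma fib_seven (hB : IsLeech B) {S : Finset LV} (hN : ∀ v ∈ S, pairZ B v v = 14) :
    ∀ x ∈ S, (S.filter (fun y => resid 3 y = resid 3 x)).card ≤ 2 := by
  intro x hx
  by_contra hc
  push Not at hc
  obtain ⟨a, b, c, ha, hb, hc, hab, hac, hbc⟩ := Finset.two_lt_card_iff.mp hc
  rw [Finset.mem_filter] at ha hb hc
  have rab := ha.2.trans hb.2.symm
  have rac := ha.2.trans hc.2.symm
  have e1 := conj_7_7 hB (hN a ha.1) (hN b hb.1) rab hab
  have e2 := conj_7_7 hB (hN a ha.1) (hN c hc.1) rac hac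
  have e3 := conj_7_7 hB (hN b hb.1) (hN c hc.1) (hb.2.trans hc.2.symm) hbc
  obtain ⟨w, hw⟩ := (resid_eq_iff 3 _ _).mp rab
  obtain ⟨z, hz⟩ := (resid_eq_iff 3 _ _).mp rac
  push_cast at hw hz
  have hs : a + b + c = (3 : ℤ) • (a - w - z) := by
    rw [smul_sub, smul_sub, ← hw, ← hz]; module
  have n1 : pairZ B (a + b + c) (a + b + c) = 18 := by
    rw [N_add hB, N_add hB, pz_add_left, hN a ha.1, hN b hb.1, hN c hc.1, e1, e2, e3]; norm_num
  rw [hs, N_smul] at n1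
  exact hB.2.2.2.2 (a - w - z) (by omega)

/-- fibres of type 9 vectors -/
lemma nine_row (hB : IsLeech B) {F : Finset LV} (hN : ∀ v ∈ F, pairZ B v v = 18)
    (hc : ∀ v ∈ F, ∀ u ∈ F, resid 3 v = resid 3 u) :
    ∀ v ∈ F, ∑ u ∈ F, pairZ B v u ^ 2 ≤ 486 ∧
      ∑ u ∈ F, pairZ B v u ^ 2 - 324 = -9 * (∑ u ∈ F, pairZ B v u - 18) := by
  intro v hv
  have hval : ∀ u ∈ F.erase v, pairZ B v u = 0 ∨ pairZ B v u = -9 := fun u hu =>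
    conj_9_9 hB (hN v hv) (hN u (Finset.mem_of_mem_erase hu)) (hc _ hv _ (Finset.mem_of_mem_erase hu))
      (Finset.ne_of_mem_erase hu).symm
  have hnb : ((F.erase v).filter (fun u => pairZ B v u = -9)).card ≤ 2 := by
    have key : ∀ u1 ∈ (F.erase v).filter (fun u => pairZ B v u = -9),
        ∀ u2 ∈ (F.erase v).filter (fun u => pairZ B v u = -9), u1 ≠ u2 → v + u1 + u2 = 0 := by
      intro u1 h1 u2 h2 hne
      rw [Finset.mem_filter] at h1 h2
      have m1 := Finset.mem_of_mem_erase h1.1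
      have m2 := Finset.mem_of_mem_erase h2.1
      rcases conj_9_9 hB (hN _ m1) (hN _ m2) (hc _ m1 _ m2) hne with h | h
      · exfalso
        have nx : pairZ B (-(v + u1)) (-(v + u1)) = 18 := by
          rw [N_neg, N_add hB, hN v hv, hN _ m1, h1.2]; norm_num
        have rx : resid 3 (-(v + u1)) = resid 3 u2 := by
          rw [← hc _ hv _ m2, resid_eq_iff]
          obtain ⟨w, hw⟩ := (resid_eq_iff 3 _ _).mp (hc _ hv _ m1)
          refine ⟨w - v, ?_⟩
          rw [smul_sub, ← hw]; push_cast; module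
        have ip : pairZ B (-(v + u1)) u2 = 9 := by
          rw [pz_neg_left, pz_add_left, h, h2.2]; norm_num
        have hne2 : -(v + u1) ≠ u2 := by
          intro h'
          rw [h', hN _ m2] at ip
          omega
        rcases conj_9_9 hB nx (hN _ m2) rx hne2 with h' | h' <;> omega
      · apply N_eq_zero hB
        rw [N_add hB, N_add hB, pz_add_left, hN v hv, hN _ m1, hN _ m2, h1.2, h2.2, h]
        norm_num
    by_contra hcc
    push Not at hcc
    obtain ⟨a, b, c, ha, hb, hc', hab, hac, hbc⟩ := Finset.two_lt_card_iff.mp hcc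
    have k1 := key a ha b hb hab
    have k2 := key a ha c hc' hac
    exact hbc (add_left_cancel (k1.trans k2.symm))
  have e1 : ∑ u ∈ F.erase v, pairZ B v u ^ 2 = -9 * ∑ u ∈ F.erase v, pairZ B v u := by
    rw [Finset.mul_sum]
    refine Finset.sum_congr rfl fun u hu => ?_
    rcases hval u hu with h | h <;> rw [h] <;> norm_num
  have e2 : ∑ u ∈ F.erase v, pairZ B v u ^ 2
      = 81 * ((F.erase v).filter (fun u => pairZ B v u = -9)).card := by
    have : ∀ u ∈ F.erase v, pairZ B v u ^ 2 = if pairZ B v u = -9 then 81 else 0 := by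
      intro u hu
      rcases hval u hu with h | h <;> rw [h] <;> norm_num
    rw [Finset.sum_congr rfl this, ← Finset.sum_filter]
    simp [mul_comm]
  have s1 := Finset.add_sum_erase F (fun u => pairZ B v u ^ 2) hv
  have s2 := Finset.add_sum_erase F (fun u => pairZ B v u) hv
  simp only [hN v hv] at s1 s2
  constructor
  · rw [← s1, e2]
    have : (((F.erase v).filter (fun u => pairZ B v u = -9)).card : ℤ) ≤ 2 := by exact_mod_cast hnb
    linarith
  · rw [← s1, ← s2, e1]; ring

lemma nine_main (hB : IsLeech B) {F : Finset LV} (hN : ∀ v ∈ F, pairZ B v v = 18)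
    (hc : ∀ v ∈ F, ∀ u ∈ F, resid 3 v = resid 3 u) :
    F.card ≤ 36 ∧ (F.card = 36 → (∀ x, ∑ g ∈ F, pairZ B x g ^ 2 = 27 * pairZ B x x) ∧
      ∑ g ∈ F, g = 0) := by
  have row := nine_row hB hN hc
  have hs1 : ∑ v ∈ F, pairZ B v v = 18 * F.card := by
    rw [Finset.sum_congr rfl hN]; simp [mul_comm]
  have hs2 : ∑ v ∈ F, ∑ u ∈ F, pairZ B v u ^ 2 ≤ 486 * F.card := by
    refine (Finset.sum_le_sum (fun v hv => (row v hv).1)).trans ?_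
    simp [mul_comm]
  have hf := frame_le hB F
  rw [hs1] at hf
  constructor
  · have h1 := hf.1
    by_contra hcc
    push Not at hcc
    have hc' : (37 : ℤ) ≤ F.card := by exact_mod_cast hcc
    nlinarith
  · intro hcc
    rw [hcc] at hf hs2
    have heq : ∑ v ∈ F, ∑ u ∈ F, pairZ B v u ^ 2 = 17496 := by
      have := hf.1
      push_cast at *; linarith
    refine ⟨fun x => ?_, ?_⟩
    · have := hf.2 (by rw [heq]; norm_num) x
      push_cast at this
      linarith
    · apply N_eq_zero hB
      rw [N_sum]
      have := Finset.sum_congr rfl (fun v hv => (row v hv).2)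
      rw [Finset.sum_sub_distrib, ← Finset.mul_sum, Finset.sum_sub_distrib, heq] at this
      simp only [Finset.sum_const, hcc, nsmul_eq_mul] at this
      push_cast at this
      linarith

end LeechAux

section LeechAux

variable {B : Matrix (Fin 24) (Fin 24) ℤ}

/-- the ten representative orbits -/
def repF (L O3 O4 O5 O6a O6b O7 O8b O9b : Finset LV) : Fin 10 → Finset LV :=
  ![{0}, L, O3, O4, O5, O6a, O6b, O7, O8b, O9b]

def repT : Fin 10 → ℤ := ![0, 2, 3, 4, 5, 6, 6, 7, 8, 9]

def repD : Fin 10 → ℕ := ![1, 1, 1, 1, 1, 1, 3, 2, 9, 36]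

/-- standing data -/
structure Reps (B : Matrix (Fin 24) (Fin 24) ℤ) (L O3 O4 O5 O6a O6b O7 O8b O9b : Finset LV) :
    Prop where
  hB : IsLeech B
  o2 : IsOrb B L 2
  o3 : IsOrb B O3 3
  o4 : IsOrb B O4 4
  o5 : IsOrb B O5 5
  o6a : IsOrb B O6a 6
  o6b : IsOrb B O6b 6
  o7 : IsOrb B O7 7
  o8b : IsOrb B O8b 8
  o9b : IsOrb B O9b 9
  c2 : L.card = 3 * 65520
  c3 : O3.card = 256 * 65520
  c4 : O4.card = 6075 * 65520
  c5 : O5.card = 70656 * 65520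
  c6a : O6a.card = 518400 * 65520
  c6b : O6b.card = 6900 * 65520
  c7 : O7.card = 2861568 * 65520
  c8b : O8b.card = 12295800 * 65520
  c9b : O9b.card = 32972800 * 65520
  hL : ∀ x, x ∈ L ↔ pairZ B x x = 4
  q3 : ∀ v ∈ O3, ∑ w ∈ L, pairZ B v w ^ 2 = 196560
  q4 : ∀ v ∈ O4, ∑ w ∈ L, pairZ B v w ^ 2 = 262080

lemma orb_zero : IsOrb B {0} 0 := by
  refine ⟨⟨0, by simp⟩, ?_, ?_, ?_⟩
  · intro v hv u hu
    rw [Finset.mem_singleton] at hv hu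
    subst hv; subst hu
    exact ⟨1, cg_one, by simp⟩
  · intro s hs v hv
    rw [Finset.mem_singleton] at hv
    subst hv; simp
  · intro v hv
    rw [Finset.mem_singleton] at hv
    subst hv; simp [pz_zero_left]

lemma orb_count {O R : Finset LV} {a b : ℤ} (hO : IsOrb B O a) (hR : IsOrb B R b)
    {u₀ v₀ : LV} (hu : u₀ ∈ O) (hv : v₀ ∈ R) :
    O.card * (R.filter (fun y => resid 3 y = resid 3 u₀)).card
      = R.card * (O.filter (fun y => resid 3 y = resid 3 v₀)).card := by
  have h := orb_double hO hR (fun u v => if resid 3 u = resid 3 v then 1 else 0)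
    (fun s hs v u => by simp only [resid_cg 3 hs]) hu hv
  simp only [Finset.sum_boole, eq_comm (a := resid 3 u₀)] at h
  exact_mod_cast h

lemma Reps.orb {L O3 O4 O5 O6a O6b O7 O8b O9b : Finset LV}
    (h : Reps B L O3 O4 O5 O6a O6b O7 O8b O9b) :
    ∀ i, IsOrb B (repF L O3 O4 O5 O6a O6b O7 O8b O9b i) (repT i) := by
  intro i
  fin_cases i
  · exact orb_zero
  · exact h.o2
  · exact h.o3
  · exact h.o4
  · exact h.o5
  · exact h.o6a
  · exact h.o6b
  · exact h.o7
  · exact h.o8b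
  · exact h.o9b

lemma rep_pairs : ∀ i j : Fin 10, i < j → (3 : ℤ) ∣ repT i - repT j →
    (i = 0 ∧ 0 < repT j ∧ repT j < 18) ∨ (i = 1 ∧ j = 4) ∨ (i = 1 ∧ j = 8) ∨ (i = 4 ∧ j = 8) ∨ (i = 2 ∧ j = 5) ∨
    (i = 2 ∧ j = 6) ∨ (i = 2 ∧ j = 9) ∨ (i = 5 ∧ j = 6) ∨ (i = 5 ∧ j = 9) ∨ (i = 6 ∧ j = 9) ∨
    (i = 3 ∧ j = 7) := by
  decide

section
variable {L O3 O4 O5 O6a O6b O7 O8b O9b : Finset LV}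

lemma Reps.six_nine (h : Reps B L O3 O4 O5 O6a O6b O7 O8b O9b) {R : Finset LV}
    (hR : IsOrb B R 6) (hcard : 24 * R.card < O9b.card) {v u : LV} (hv : v ∈ R) (hu : u ∈ O9b)
    (hr : resid 3 v = resid 3 u) : False := by
  have hc := orb_count h.o9b hR hu hv
  have h1 : (O9b.filter (fun y => resid 3 y = resid 3 v)).card ≤ 24 := by
    refine le_trans ?_ (cnt_five h.hB (L := L) (fun w hw => (h.hL w).mp hw)
      (v := v) (by rw [hR.norm v hv]; norm_num))
    classical
    refine (Finset.card_le_card (t := (L.filter (fun w => pairZ B v w = 5)).image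
      (fun w => v - (3 : ℤ) • w)) ?_).trans Finset.card_image_le
    intro y hy
    rw [Finset.mem_filter] at hy
    obtain ⟨w, hw1, hw2, hw3⟩ := conj_6_9 h.hB (v := v) (u := y) (by rw [hR.norm v hv]; norm_num)
      (by rw [h.o9b.norm y hy.1]; norm_num) hy.2.symm
    rw [Finset.mem_image]
    exact ⟨w, Finset.mem_filter.mpr ⟨(h.hL w).mpr hw1, hw2⟩, hw3.symm⟩
  have h2 : 1 ≤ (R.filter (fun y => resid 3 y = resid 3 u)).card :=
    Finset.card_pos.mpr ⟨v, Finset.mem_filter.mpr ⟨hv, hr⟩⟩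
  have h3 : O9b.card * 1 ≤ R.card * 24 := by
    calc O9b.card * 1 ≤ _ := Nat.mul_le_mul_left _ h2
      _ = _ := hc
      _ ≤ _ := Nat.mul_le_mul_left _ h1
  omega

lemma Reps.six_a (h : Reps B L O3 O4 O5 O6a O6b O7 O8b O9b) {v u : LV} (hv : v ∈ O6a)
    (hu : pairZ B u u = 12) (hr : resid 3 v = resid 3 u) : v = u := by
  by_contra hne
  have hc := conj_6_6 h.hB (by rw [h.o6a.norm v hv]; norm_num) hu hr hne
  have := orb_card_half h.o6a h.hL ⟨v, hv, hc.2⟩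
  rw [h.c6a, h.c2] at this
  omega

lemma Reps.disj (h : Reps B L O3 O4 O5 O6a O6b O7 O8b O9b) :
    ∀ i j : Fin 10, i < j → ∀ v ∈ repF L O3 O4 O5 O6a O6b O7 O8b O9b i,
      ∀ u ∈ repF L O3 O4 O5 O6a O6b O7 O8b O9b j, resid 3 v = resid 3 u → False := by
  intro i j hij v hv u hu hr
  have nv := (h.orb i).norm v hv
  have nu := (h.orb j).norm u hu
  have hB := h.hB
  have h3 := type_mod hB nv nu hr
  have hne : ∀ a b : ℤ, repT i = a → repT j = b → a ≠ b → v ≠ u := by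
    rintro a b rfl rfl hab rfl
    omega
  rcases rep_pairs i j hij h3 with ⟨rfl, hj, hj'⟩ | ⟨rfl, rfl⟩ | ⟨rfl, rfl⟩ | ⟨rfl, rfl⟩ | ⟨rfl, rfl⟩ |
    ⟨rfl, rfl⟩ | ⟨rfl, rfl⟩ | ⟨rfl, rfl⟩ | ⟨rfl, rfl⟩ | ⟨rfl, rfl⟩ | ⟨rfl, rfl⟩
  · have hv' : v ∈ ({0} : Finset LV) := hv
    rw [Finset.mem_singleton] at hv'
    subst hv'
    exact no_zero hB nu hr.symm hj hj'
  · exact noconj hB (a := 2) (b := 5) nv nu hr (hne 2 5 rfl rfl (by norm_num)) (by norm_num)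
  · have hu' : u ∈ O8b := hu
    have e := conj_2_8 hB (v := v) (u := u) nv nu hr
    have := orb_card_sq (c := -3) h.o8b h.hL ⟨u, hu', v, v, nv, nv, by rw [e]; module⟩
    rw [h.c8b, h.c2] at this
    omega
  · have hu' : u ∈ O8b := hu
    have := orb_card_sq (c := -2) h.o8b h.hL ⟨u, hu', conj_5_8 hB (v := v) (u := u) nv nu hr⟩
    rw [h.c8b, h.c2] at this
    omega
  · exact noconj hB (a := 3) (b := 6) nv nu hr (hne 3 6 rfl rfl (by norm_num)) (by norm_num)
  · exact noconj hB (a := 3) (b := 6) nv nu hr (hne 3 6 rfl rfl (by norm_num)) (by norm_num)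
  · exact noconj hB (a := 3) (b := 9) nv nu hr (hne 3 9 rfl rfl (by norm_num)) (by norm_num)
  · have hv' : v ∈ O6a := hv
    have hu' : u ∈ O6b := hu
    have e := h.six_a hv' nu hr
    subst e
    have hsub : O6a ⊆ O6b := by
      intro x hx
      obtain ⟨s, hs, rfl⟩ := h.o6a.trans v hv' x hx
      exact h.o6b.closed s hs v hu'
    have := Finset.card_le_card hsub
    rw [h.c6a, h.c6b] at this
    omega
  · have hv' : v ∈ O6a := hv
    have hu' : u ∈ O9b := hu
    exact h.six_nine h.o6a (by rw [h.c6a, h.c9b]; norm_num) hv' hu' hr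
  · have hv' : v ∈ O6b := hv
    have hu' : u ∈ O9b := hu
    exact h.six_nine h.o6b (by rw [h.c6b, h.c9b]; norm_num) hv' hu' hr
  · exact noconj hB (a := 4) (b := 7) nv nu hr (hne 4 7 rfl rfl (by norm_num)) (by norm_num)

lemma Reps.fib_le (h : Reps B L O3 O4 O5 O6a O6b O7 O8b O9b) :
    ∀ i, ∀ x ∈ repF L O3 O4 O5 O6a O6b O7 O8b O9b i,
      ((repF L O3 O4 O5 O6a O6b O7 O8b O9b i).filter (fun y => resid 3 y = resid 3 x)).card
        ≤ repD i := by
  have hB := h.hB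
  have small : ∀ (S : Finset LV) (a : ℤ), IsOrb B S a → (a = 2 ∨ a = 3 ∨ a = 4 ∨ a = 5) →
      ∀ x ∈ S, (S.filter (fun y => resid 3 y = resid 3 x)).card ≤ 1 := by
    intro S a hS ha
    refine fib_one fun v hv u hu hr => ?_
    by_contra hne
    refine noconj hB (hS.norm v hv) (hS.norm u hu) hr hne ?_
    omega
  intro i
  fin_cases i
  · change ∀ x ∈ ({0} : Finset LV), (({0} : Finset LV).filter _).card ≤ 1
    intro x _
    exact (Finset.card_filter_le _ _).trans (by simp)
  · exact small L 2 h.o2 (by norm_num)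
  · exact small O3 3 h.o3 (by norm_num)
  · exact small O4 4 h.o4 (by norm_num)
  · exact small O5 5 h.o5 (by norm_num)
  · exact fib_one fun v hv u hu hr => h.six_a hv (h.o6a.norm u hu) hr
  · exact fib_simplex (S := O6b) hB (m := 12) (k := 6) 3 h.o6b.norm
      (fun v hv u hu hr hne => (conj_6_6 hB (h.o6b.norm v hv) (h.o6b.norm u hu) hr hne).1)
      (by norm_num) (by norm_num)
  · exact fib_seven (S := O7) hB h.o7.norm
  · refine fib_simplex (S := O8b) hB (m := 16) (k := 2) 9 h.o8b.norm
      (fun v hv u hu hr hne => ?_) (by norm_num) (by norm_num)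
    rcases conj_8_8 hB (h.o8b.norm v hv) (h.o8b.norm u hu) hr hne with h' | h'
    · exact h'
    · exfalso
      have := orb_card_sq (c := -2) h.o8b h.hL ⟨v, hv, h'⟩
      rw [h.c8b, h.c2] at this
      omega
  · change ∀ x ∈ O9b, (O9b.filter _).card ≤ 36
    intro x hx
    refine (nine_main hB ?_ ?_).1
    · intro v hv
      exact h.o9b.norm v (Finset.mem_filter.mp hv).1
    · intro v hv u hu
      exact (Finset.mem_filter.mp hv).2.trans (Finset.mem_filter.mp hu).2.symm

lemma Reps.main (h : Reps B L O3 O4 O5 O6a O6b O7 O8b O9b) :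
    (∀ x : LV, ∃ i, ∃ v ∈ repF L O3 O4 O5 O6a O6b O7 O8b O9b i, resid 3 x = resid 3 v) ∧
    (∀ i, ∀ x ∈ repF L O3 O4 O5 O6a O6b O7 O8b O9b i,
      ((repF L O3 O4 O5 O6a O6b O7 O8b O9b i).filter (fun y => resid 3 y = resid 3 x)).card
        = repD i) := by
  classical
  obtain ⟨I, hI⟩ : ∃ I : Fin 10 → Finset (Fin 24 → ZMod 3), ∀ i,
    I i = (repF L O3 O4 O5 O6a O6b O7 O8b O9b i).image (resid 3) := ⟨_, fun _ => rfl⟩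
  have hle : ∀ i, (repF L O3 O4 O5 O6a O6b O7 O8b O9b i).card ≤ repD i * (I i).card := by
    intro i
    rw [hI]
    exact fiber_le _ (resid 3) (repD i) (h.fib_le i)
  have hdis : ∀ i j, i ≠ j → Disjoint (I i) (I j) := by
    have h1 : ∀ i j, i < j → Disjoint (I i) (I j) := by
      intro i j hij
      rw [Finset.disjoint_left, hI, hI]
      intro a ha hb
      obtain ⟨v, hv, rfl⟩ := Finset.mem_image.mp ha
      obtain ⟨u, hu, hr⟩ := Finset.mem_image.mp hb
      exact h.disj i j hij v hv u hu hr.symm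
    intro i j hij
    rcases lt_or_gt_of_ne hij with h' | h'
    · exact h1 i j h'
    · exact (h1 j i h').symm
  have hU : (Finset.univ.biUnion I).card = ∑ i, (I i).card :=
    Finset.card_biUnion (fun i _ j _ hij => hdis i j hij)
  have huniv : Fintype.card (Fin 24 → ZMod 3) = 3 ^ 24 := by simp [ZMod.card]
  have hUle : (Finset.univ.biUnion I).card ≤ 3 ^ 24 := by
    rw [← huniv]; exact Finset.card_le_univ _
  have l0 : 1 ≤ 1 * (I 0).card := hle 0
  have l1 : L.card ≤ 1 * (I 1).card := hle 1
  have l2 : O3.card ≤ 1 * (I 2).card := hle 2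
  have l3 : O4.card ≤ 1 * (I 3).card := hle 3
  have l4 : O5.card ≤ 1 * (I 4).card := hle 4
  have l5 : O6a.card ≤ 1 * (I 5).card := hle 5
  have l6 : O6b.card ≤ 3 * (I 6).card := hle 6
  have l7 : O7.card ≤ 2 * (I 7).card := hle 7
  have l8 : O8b.card ≤ 9 * (I 8).card := hle 8
  have l9 : O9b.card ≤ 36 * (I 9).card := hle 9
  rw [h.c2] at l1
  rw [h.c3] at l2
  rw [h.c4] at l3
  rw [h.c5] at l4
  rw [h.c6a] at l5
  rw [h.c6b] at l6
  rw [h.c7] at l7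
  rw [h.c8b] at l8
  rw [h.c9b] at l9
  have hsum : ∑ i, (I i).card = (I 0).card + (I 1).card + (I 2).card + (I 3).card + (I 4).card
      + (I 5).card + (I 6).card + (I 7).card + (I 8).card + (I 9).card := by
    simp only [Fin.sum_univ_succ, Fin.sum_univ_zero]
    simp only [Fin.succ_zero_eq_one, Fin.succ_one_eq_two]
    change (I 0).card + ((I 1).card + ((I 2).card + ((I 3).card + ((I 4).card + ((I 5).card +
      ((I 6).card + ((I 7).card + ((I 8).card + ((I 9).card + 0))))))))) = _
    omega
  rw [hU, hsum] at hUle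
  constructor
  · have hfull : Finset.univ.biUnion I = Finset.univ := by
      rw [← Finset.card_eq_iff_eq_univ, huniv, hU, hsum]
      omega
    intro x
    have hx : resid 3 x ∈ Finset.univ.biUnion I := by rw [hfull]; exact Finset.mem_univ _
    obtain ⟨i, _, hi⟩ := Finset.mem_biUnion.mp hx
    rw [hI] at hi
    obtain ⟨v, hv, hr⟩ := Finset.mem_image.mp hi
    exact ⟨i, v, hv, hr.symm⟩
  · have hge : ∀ i, repD i * (I i).card ≤ (repF L O3 O4 O5 O6a O6b O7 O8b O9b i).card := by
      intro i
      fin_cases i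
      · change 1 * (I 0).card ≤ 1; omega
      · change 1 * (I 1).card ≤ L.card; rw [h.c2]; omega
      · change 1 * (I 2).card ≤ O3.card; rw [h.c3]; omega
      · change 1 * (I 3).card ≤ O4.card; rw [h.c4]; omega
      · change 1 * (I 4).card ≤ O5.card; rw [h.c5]; omega
      · change 1 * (I 5).card ≤ O6a.card; rw [h.c6a]; omega
      · change 3 * (I 6).card ≤ O6b.card; rw [h.c6b]; omega
      · change 2 * (I 7).card ≤ O7.card; rw [h.c7]; omega
      · change 9 * (I 8).card ≤ O8b.card; rw [h.c8b]; omega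
      · change 36 * (I 9).card ≤ O9b.card; rw [h.c9b]; omega
    intro i
    refine fiber_tight _ (resid 3) (repD i) (h.fib_le i) ?_
    rw [← hI]
    exact hge i

end

end LeechAux

section LeechAux

variable {B : Matrix (Fin 24) (Fin 24) ℤ}

lemma K_le {O W : Finset LV} {v : LV}
    (h : ∀ u ∈ O, resid 3 u = resid 3 v → ∃ w ∈ W, u = v - (3 : ℤ) • w) :
    (O.filter (fun y => resid 3 y = resid 3 v)).card ≤ W.card := by
  classical
  refine (Finset.card_le_card (t := W.image (fun w => v - (3 : ℤ) • w)) ?_).trans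
    Finset.card_image_le
  intro u hu
  rw [Finset.mem_filter] at hu
  obtain ⟨w, hw, rfl⟩ := h u hu.1 hu.2
  exact Finset.mem_image_of_mem _ hw

lemma ge_bound {L : Finset LV} (hneg : ∀ w ∈ L, -w ∈ L) (x : LV) {c : ℤ} (hc : 0 < c) :
    2 * c ^ 2 * (L.filter (fun w => c ≤ pairZ B x w)).card ≤ ∑ w ∈ L, pairZ B x w ^ 2 ∧
    2 * (L.filter (fun w => c ≤ pairZ B x w)).card ≤ L.card := by
  classical
  set S := L.filter (fun w => c ≤ pairZ B x w) with hS
  set S' := S.image (fun w => -w) with hS'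
  have hcard : S'.card = S.card := Finset.card_image_of_injective _ neg_injective
  have hs' : ∀ w ∈ S', w ∈ L ∧ pairZ B x w ≤ -c := by
    intro w hw
    obtain ⟨y, hy, rfl⟩ := Finset.mem_image.mp hw
    rw [hS, Finset.mem_filter] at hy
    exact ⟨hneg y hy.1, by rw [pz_neg_right]; linarith [hy.2]⟩
  have hd : Disjoint S S' := by
    rw [Finset.disjoint_left]
    intro a ha hb
    rw [hS, Finset.mem_filter] at ha
    have := (hs' a hb).2
    omega
  have hsub : S ∪ S' ⊆ L := by
    intro a ha
    rcases Finset.mem_union.mp ha with h | h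
    · exact (Finset.mem_filter.mp h).1
    · exact (hs' a h).1
  constructor
  · have h1 := Finset.sum_le_sum_of_subset_of_nonneg (f := fun w => pairZ B x w ^ 2) hsub
      (fun _ _ _ => sq_nonneg _)
    have h2 : ∑ w ∈ S ∪ S', c ^ 2 ≤ ∑ w ∈ S ∪ S', pairZ B x w ^ 2 := by
      refine Finset.sum_le_sum fun w hw => ?_
      rcases Finset.mem_union.mp hw with h | h
      · have := (Finset.mem_filter.mp h).2
        nlinarith
      · have := (hs' w h).2
        nlinarith
    rw [Finset.sum_const, Finset.card_union_of_disjoint hd, hcard, nsmul_eq_mul] at h2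
    push_cast at h2
    linarith
  · have h1 := Finset.card_le_card hsub
    rw [Finset.card_union_of_disjoint hd, hcard] at h1
    omega

section
variable {L O3 O4 O5 O6a O6b O7 O8b O9b : Finset LV}

lemma Reps.neg (h : Reps B L O3 O4 O5 O6a O6b O7 O8b O9b) : ∀ w ∈ L, -w ∈ L := by
  intro w hw
  rw [h.hL] at hw ⊢
  rw [N_neg, hw]

lemma Reps.k2 (h : Reps B L O3 O4 O5 O6a O6b O7 O8b O9b) {O : Finset LV} {a : ℤ}
    (hO : IsOrb B O a) {v : LV} (hv : v ∈ L) (ha : a = 8 ∨ a = 11 ∨ a = 14) :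
    (O.filter (fun y => resid 3 y = resid 3 v)).card ≤ 196560 ∧
    (a = 8 → (O.filter (fun y => resid 3 y = resid 3 v)).card ≤ 1) ∧
    (a = 11 → (O.filter (fun y => resid 3 y = resid 3 v)).card ≤ 0) := by
  have hB := h.hB
  have nv : pairZ B v v = 2 * 2 := h.o2.norm v hv
  have e8 : a = 8 → (O.filter (fun y => resid 3 y = resid 3 v)).card ≤ 1 := by
    rintro rfl
    refine (K_le (W := {v}) ?_).trans (by simp)
    intro u hu hr
    refine ⟨v, by simp, ?_⟩
    rw [conj_2_8 hB nv (hO.norm u hu) hr.symm]; module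
  have e11 : a = 11 → (O.filter (fun y => resid 3 y = resid 3 v)).card ≤ 0 := by
    rintro rfl
    refine (K_le (W := ∅) ?_).trans (by simp)
    intro u hu hr
    exfalso
    have nu := hO.norm u hu
    exact noconj hB nv nu hr.symm (by rintro rfl; omega) (by norm_num)
  refine ⟨?_, e8, e11⟩
  rcases ha with ha | ha | rfl
  · have := e8 ha; omega
  · have := e11 ha; omega
  · have : (O.filter (fun y => resid 3 y = resid 3 v)).card ≤ L.card := by
      refine K_le ?_
      intro u hu hr
      have nu := hO.norm u hu
      obtain ⟨w, t, x, h1, h2, h3, h4, h5, h6, h7, h8, h9, h10⟩ :=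
        cong3 hB nv nu hr.symm (by rintro rfl; omega)
      have : t = 2 := by
        have : t = 2 ∨ t = 3 := by omega
        rcases this with rfl | rfl
        · rfl
        · norm_num at h8
      subst this
      exact ⟨w, (h.hL w).mpr h2, h1⟩
    rw [h.c2] at this
    exact this

lemma Reps.k3 (h : Reps B L O3 O4 O5 O6a O6b O7 O8b O9b) {O : Finset LV} {a : ℤ}
    (hO : IsOrb B O a) {v : LV} (hv : v ∈ O3) :
    (a = 9 → (O.filter (fun y => resid 3 y = resid 3 v)).card ≤ 0) ∧
    (a = 12 → (O.filter (fun y => resid 3 y = resid 3 v)).card ≤ 10921) ∧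
    (a = 15 → (O.filter (fun y => resid 3 y = resid 3 v)).card ≤ 24570) := by
  classical
  have hB := h.hB
  have nv : pairZ B v v = 2 * 3 := h.o3.norm v hv
  have q := h.q3 v hv
  refine ⟨?_, ?_, ?_⟩
  · rintro rfl
    refine (K_le (W := ∅) ?_).trans (by simp)
    intro u hu hr
    exfalso
    have nu := hO.norm u hu
    exact noconj hB nv nu hr.symm (by rintro rfl; omega) (by norm_num)
  · rintro rfl
    have b := (ge_bound (B := B) h.neg v (c := 3) (by norm_num)).1
    rw [q] at b
    refine (K_le (W := insert v (L.filter (fun w => 3 ≤ pairZ B v w))) ?_).trans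
      ((Finset.card_insert_le _ _).trans (by omega))
    intro u hu hr
    have nu := hO.norm u hu
    obtain ⟨w, t, x, h1, h2, h3, h4, h5, h6, h7, h8, h9, h10⟩ :=
      cong3 hB nv nu hr.symm (by rintro rfl; omega)
    refine ⟨w, ?_, h1⟩
    rw [Finset.mem_insert, Finset.mem_filter, h.hL]
    rcases h10 with h10 | h10
    · exact Or.inl h10.symm
    · right; omega
  · rintro rfl
    have b := (ge_bound (B := B) h.neg v (c := 2) (by norm_num)).1
    rw [q] at b
    refine (K_le (W := (L.filter (fun w => 2 ≤ pairZ B v w))) ?_).trans (by omega)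
    intro u hu hr
    have nu := hO.norm u hu
    obtain ⟨w, t, x, h1, h2, h3, h4, h5, h6, h7, h8, h9, h10⟩ :=
      cong3 hB nv nu hr.symm (by rintro rfl; omega)
    refine ⟨w, ?_, h1⟩
    rw [Finset.mem_filter, h.hL]
    have ht : t = 2 ∨ t = 3 ∨ t = 4 := by omega
    rcases ht with rfl | rfl | rfl
    · omega
    · rcases h10 with rfl | h10 <;> omega
    · norm_num at h8

lemma Reps.k4 (h : Reps B L O3 O4 O5 O6a O6b O7 O8b O9b) {O : Finset LV} {a : ℤ}
    (hO : IsOrb B O a) {v : LV} (hv : v ∈ O4) :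
    (a = 10 → (O.filter (fun y => resid 3 y = resid 3 v)).card ≤ 8190) ∧
    (a = 13 → (O.filter (fun y => resid 3 y = resid 3 v)).card ≤ 14560) ∧
    (a = 16 → (O.filter (fun y => resid 3 y = resid 3 v)).card ≤ 32761) := by
  classical
  have hB := h.hB
  have nv : pairZ B v v = 2 * 4 := h.o4.norm v hv
  have q := h.q4 v hv
  refine ⟨?_, ?_, ?_⟩
  · rintro rfl
    have b := (ge_bound (B := B) h.neg v (c := 4) (by norm_num)).1
    rw [q] at b
    refine (K_le (W := (L.filter (fun w => 4 ≤ pairZ B v w))) ?_).trans (by omega)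
    intro u hu hr
    have nu := hO.norm u hu
    obtain ⟨w, t, x, h1, h2, h3, h4, h5, h6, h7, h8, h9, h10⟩ :=
      cong3 hB nv nu hr.symm (by rintro rfl; omega)
    refine ⟨w, ?_, h1⟩
    rw [Finset.mem_filter, h.hL]
    have ht : t = 2 ∨ t = 3 := by omega
    rcases ht with rfl | rfl
    · omega
    · norm_num at h8
  · rintro rfl
    have b := (ge_bound (B := B) h.neg v (c := 3) (by norm_num)).1
    rw [q] at b
    refine (K_le (W := (L.filter (fun w => 3 ≤ pairZ B v w))) ?_).trans (by omega)
    intro u hu hr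
    have nu := hO.norm u hu
    obtain ⟨w, t, x, h1, h2, h3, h4, h5, h6, h7, h8, h9, h10⟩ :=
      cong3 hB nv nu hr.symm (by rintro rfl; omega)
    refine ⟨w, ?_, h1⟩
    rw [Finset.mem_filter, h.hL]
    rcases h10 with rfl | h10 <;> omega
  · rintro rfl
    have b := (ge_bound (B := B) h.neg v (c := 2) (by norm_num)).1
    rw [q] at b
    refine (K_le (W := insert v ((L.filter (fun w => 2 ≤ pairZ B v w)).image
      (fun w => if pairZ B v w = 3 then v - w else w))) ?_).trans
      ((Finset.card_insert_le _ _).trans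
        ((Nat.add_le_add_right Finset.card_image_le 1).trans (by omega)))
    intro u hu hr
    have nu := hO.norm u hu
    obtain ⟨w, t, x, h1, h2, h3, h4, h5, h6, h7, h8, h9, h10⟩ :=
      cong3 hB nv nu hr.symm (by rintro rfl; omega)
    refine ⟨w, ?_, h1⟩
    rw [Finset.mem_insert, Finset.mem_image]
    rcases h10 with h10 | h10
    · exact Or.inl h10.symm
    · right
      have ht : t = 2 ∨ t = 3 := by omega
      rcases ht with rfl | rfl
      · refine ⟨w, ?_, ?_⟩
        · rw [Finset.mem_filter, h.hL]; omega
        · rw [if_neg (by omega)]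
      · have e : pairZ B v (v - w) = 3 := by rw [pz_sub_right]; omega
        refine ⟨v - w, ?_, ?_⟩
        · rw [Finset.mem_filter, h.hL]; omega
        · rw [if_pos e]; abel

lemma Reps.k6b (h : Reps B L O3 O4 O5 O6a O6b O7 O8b O9b) {O : Finset LV} {a : ℤ}
    (hO : IsOrb B O a) {v : LV} (hv : v ∈ O6b) :
    (a = 12 → (O.filter (fun y => resid 3 y = resid 3 v)).card ≤ 98304) ∧
    (a = 15 → (O.filter (fun y => resid 3 y = resid 3 v)).card ≤ 294840) := by
  classical
  have hB := h.hB
  have nv : pairZ B v v = 2 * 6 := h.o6b.norm v hv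
  constructor
  · rintro rfl
    have b := (cnt_bound (B := B) h.neg v (c := 4) (by norm_num)).2
    have b5 := cnt_five hB (L := L) (fun w hw => (h.hL w).mp hw) (v := v) nv
    unfold cnt at b b5
    rw [h.c2] at b
    refine (K_le (W := L.filter (fun w => pairZ B v w = 4) ∪
      (L.filter (fun w => pairZ B v w = 5)).image (fun w => v - w)) ?_).trans
      ((Finset.card_union_le _ _).trans
        ((Nat.add_le_add_left Finset.card_image_le _).trans (by omega)))
    intro u hu hr
    have nu := hO.norm u hu
    obtain ⟨w, t, x, h1, h2, h3, h4, h5, h6, h7, h8, h9, h10⟩ :=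
      cong3 hB nv nu hr.symm (by rintro rfl; omega)
    refine ⟨w, ?_, h1⟩
    rw [Finset.mem_union, Finset.mem_image, Finset.mem_filter, h.hL]
    have ht : t = 2 ∨ t = 3 ∨ t = 4 := by omega
    rcases ht with rfl | rfl | rfl
    · left; omega
    · right
      refine ⟨v - w, ?_, by abel⟩
      have e : pairZ B v (v - w) = 5 := by rw [pz_sub_right]; omega
      rw [Finset.mem_filter, h.hL]; omega
    · norm_num at h8
  · rintro rfl
    have hf : (O6b.filter (fun y => resid 3 y = resid 3 v)).card = 3 := h.main.2 6 v hv
    obtain ⟨u', hu', hne⟩ : ∃ u' ∈ O6b.filter (fun y => resid 3 y = resid 3 v), u' ≠ v := by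
      apply Finset.exists_mem_ne
      omega
    rw [Finset.mem_filter] at hu'
    obtain ⟨p, p', hp, hp', hpp, hvp⟩ :=
      (conj_6_6 hB nv (h.o6b.norm u' hu'.1) hu'.2.symm hne.symm).2
    have b := (cnt_bound (B := B) h.neg v (c := 3) (by norm_num)).2
    unfold cnt at b
    rw [h.c2] at b
    refine (K_le (W := L.filter (fun w => pairZ B v w = 3) ∪ L.image (fun w => w + p)) ?_).trans
      ((Finset.card_union_le _ _).trans
        ((Nat.add_le_add_left Finset.card_image_le _).trans (by rw [h.c2]; omega)))
    intro u hu hr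
    have nu := hO.norm u hu
    obtain ⟨w, t, x, h1, h2, h3, h4, h5, h6, h7, h8, h9, h10⟩ :=
      cong3 hB nv nu hr.symm (by rintro rfl; omega)
    refine ⟨w, ?_, h1⟩
    rw [Finset.mem_union, Finset.mem_image, Finset.mem_filter, h.hL]
    have ht : t = 2 ∨ t = 3 ∨ t = 4 := by omega
    rcases ht with rfl | rfl | rfl
    · left; omega
    · right
      have s1 : pairZ B v w = pairZ B p w + pairZ B p' w := by rw [hvp, pz_add_left]
      have s2 := N_sub hB w p
      have s3 := N_sub hB w p'
      rw [pz_comm hB w p] at s2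
      rw [pz_comm hB w p'] at s3
      have g2 := N_ge_four hB (x := w - p) (by rw [sub_ne_zero]; rintro rfl; omega)
      have g3 := N_ge_four hB (x := w - p') (by rw [sub_ne_zero]; rintro rfl; omega)
      refine ⟨w - p, ?_, by abel⟩
      rw [h.hL]
      omega
    · rcases h10 with rfl | h10 <;> omega

/-- a type 15 orbit congruent to `O9b` has size a multiple of that of `O9b` -/
lemma Reps.k9b (h : Reps B L O3 O4 O5 O6a O6b O7 O8b O9b) {O : Finset LV}
    (hO : IsOrb B O 15) {u v : LV} (hu : u ∈ O) (hv : v ∈ O9b) (hr : resid 3 u = resid 3 v) :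
    ∃ j, O.card = O9b.card * j := by
  classical
  have hB := h.hB
  set F := O9b.filter (fun y => resid 3 y = resid 3 u) with hF
  have hFe : F = O9b.filter (fun y => resid 3 y = resid 3 v) := by rw [hF, hr]
  have hf : F.card = 36 := by rw [hFe]; exact h.main.2 9 v hv
  have hFN : ∀ x ∈ F, pairZ B x x = 18 := fun x hx => h.o9b.norm x (Finset.mem_filter.mp hx).1
  have hFr : ∀ x ∈ F, resid 3 u = resid 3 x := fun x hx => (Finset.mem_filter.mp hx).2.symm
  obtain ⟨tf, sz⟩ := (nine_main hB (F := F) hFN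
    (fun x hx y hy => (hFr x hx).symm.trans (hFr y hy))).2 hf
  have nu : pairZ B u u = 2 * 15 := hO.norm u hu
  have hval : ∀ x ∈ F, (pairZ B u x - 6) * (pairZ B u x + 3)
      = 162 * (if pairZ B u x = -12 then 1 else 0) + 486 * (if pairZ B u x = -21 then 1 else 0) := by
    intro x hx
    have nx := hFN x hx
    obtain ⟨w, t, y, h1, h2, h3, h4, h5, h6, h7, h8, h9, h10⟩ :=
      cong3 (b := 9) hB nu nx (hFr x hx) (by rintro rfl; omega)
    have ht : t = 2 ∨ t = 3 ∨ t = 4 ∨ t = 5 := by omega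
    rcases ht with rfl | rfl | rfl | rfl <;> norm_num at h6 <;> rw [h6] <;> norm_num
  have hs := Finset.sum_congr rfl hval
  rw [Finset.sum_add_distrib, ← Finset.mul_sum, ← Finset.mul_sum, Finset.sum_boole,
    Finset.sum_boole] at hs
  have e2 := tf u
  have e1 : ∑ x ∈ F, pairZ B u x = 0 := by
    rw [← pz_sum_right, sz, pz_zero_right]
  have e3 : ∑ x ∈ F, (pairZ B u x - 6) * (pairZ B u x + 3) = 162 := by
    have : ∀ x, (pairZ B u x - 6) * (pairZ B u x + 3) = pairZ B u x ^ 2 - 3 * pairZ B u x - 18 :=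
      fun x => by ring
    simp only [this]
    rw [Finset.sum_sub_distrib, Finset.sum_sub_distrib, ← Finset.mul_sum, e1, e2, nu,
      Finset.sum_const, hf]
    norm_num
  rw [e3] at hs
  have one : (F.filter (fun x => pairZ B u x = -12)).card = 1 := by omega
  have hd := orb_double hO h.o9b
    (fun u v => if resid 3 v = resid 3 u ∧ pairZ B u v = -12 then 1 else 0)
    (fun s hs v u => by simp only [resid_cg 3 hs, cg_pair hs]) hu hv
  simp only [Finset.sum_boole] at hd
  have : (O9b.filter (fun x => resid 3 x = resid 3 u ∧ pairZ B u x = -12)).card = 1 := by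
    rw [← one, hF, Finset.filter_filter]
  rw [this] at hd
  rw [Nat.cast_one, mul_one] at hd
  exact ⟨(O.filter (fun x => resid 3 v = resid 3 x ∧ pairZ B x v = -12)).card, by exact_mod_cast hd⟩

end

end LeechAux

section LeechAux

variable {B : Matrix (Fin 24) (Fin 24) ℤ}

/-- packing bound -/
lemma packing {α β : Type*} [DecidableEq α] [DecidableEq β] (T : Finset α) (W : Finset β)
    (P : β → Finset α) (m t : ℕ) (h1 : ∀ w ∈ W, P w ⊆ T) (h2 : ∀ w ∈ W, (P w).card = m)
    (h3 : ∀ w ∈ W, ∀ w' ∈ W, w ≠ w' → (P w ∩ P w').card < t) :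
    W.card * m.choose t ≤ T.card.choose t := by
  have e : (W.biUnion (fun w => (P w).powersetCard t)).card = W.card * m.choose t := by
    rw [Finset.card_biUnion]
    · rw [Finset.sum_congr rfl (fun w hw => by rw [Finset.card_powersetCard, h2 w hw]),
        Finset.sum_const, smul_eq_mul]
    · intro w hw w' hw' hne
      rw [Function.onFun, Finset.disjoint_left]
      intro s hs hs'
      rw [Finset.mem_powersetCard] at hs hs'
      have := Finset.card_le_card (Finset.subset_inter hs.1 hs'.1)
      have := h3 w hw w' hw' hne
      omega
  rw [← e, ← Finset.card_powersetCard]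
  refine Finset.card_le_card ?_
  intro s hs
  rw [Finset.mem_biUnion] at hs
  obtain ⟨w, hw, hs⟩ := hs
  rw [Finset.mem_powersetCard] at hs ⊢
  exact ⟨hs.1.trans (h1 w hw), hs.2⟩

/-- the frame attached to 24 minimal vectors having inner product 5 with a type 6 vector -/
lemma six_frame (hB : IsLeech B) {S : Finset LV} {v : LV} (hv : pairZ B v v = 12)
    (hN : ∀ w ∈ S, pairZ B w w = 4) (h5 : ∀ w ∈ S, pairZ B v w = 5) (hc : S.card = 24) :
    (∀ x, ∑ w ∈ S, (2 * pairZ B x w - pairZ B x v) = -4 * pairZ B x v) ∧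
    (∀ x y, ∑ w ∈ S, (2 * pairZ B x w - pairZ B x v) * (2 * pairZ B y w - pairZ B y v)
      = 8 * pairZ B x y) := by
  classical
  have le2 : ∀ w ∈ S, ∀ w' ∈ S, w ≠ w' → pairZ B w w' ≤ 2 := by
    intro w hw w' hw' hne
    have a1 := hN w hw
    have a2 := hN w' hw'
    have a3 := N_ge_four hB (sub_ne_zero.mpr hne)
    rw [N_sub hB] at a3
    omega
  have row : ∀ w ∈ S, ∑ w' ∈ S, pairZ B w w' ≤ 50 := by
    intro w hw
    rw [← Finset.add_sum_erase S _ hw, hN w hw]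
    have : ∑ u ∈ S.erase w, pairZ B w u ≤ ∑ u ∈ S.erase w, 2 :=
      Finset.sum_le_sum fun u hu => le2 w hw u (Finset.mem_of_mem_erase hu) (Finset.ne_of_mem_erase hu).symm
    rw [Finset.sum_const, Finset.card_erase_of_mem hw, hc] at this
    norm_num at this
    linarith
  have hs : ∑ w ∈ S, w = (10 : ℤ) • v := by
    have h0 := N_nonneg hB ((∑ w ∈ S, w) - (10 : ℤ) • v)
    have h1 : pairZ B v (∑ w ∈ S, w) = 120 := by
      rw [pz_sum_right, Finset.sum_congr rfl h5, Finset.sum_const, hc]; norm_num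
    have h2 := Finset.sum_le_sum row
    rw [Finset.sum_const, hc, ← N_sum] at h2
    have h3 := N_sub hB (∑ w ∈ S, w) ((10 : ℤ) • v)
    rw [N_smul, pz_smul_right, pz_comm hB (∑ w ∈ S, w) v, h1, hv] at h3
    norm_num at h2
    have h4 : pairZ B ((∑ w ∈ S, w) - (10 : ℤ) • v) ((∑ w ∈ S, w) - (10 : ℤ) • v) = 0 := by
      linarith
    exact sub_eq_zero.mp (N_eq_zero hB h4)
  have hsx : ∀ x, ∑ w ∈ S, pairZ B x w = 10 * pairZ B x v := by
    intro x
    rw [← pz_sum_right, hs, pz_smul_right]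
  have eq2 : ∀ w ∈ S, ∀ w' ∈ S, w ≠ w' → pairZ B w w' = 2 := by
    intro w hw
    have h1 := hsx w
    rw [← Finset.add_sum_erase S _ hw, hN w hw, pz_comm hB w v, h5 w hw] at h1
    have h2 : ∑ u ∈ S.erase w, (2 - pairZ B w u) = 0 := by
      rw [Finset.sum_sub_distrib, Finset.sum_const, Finset.card_erase_of_mem hw, hc]
      norm_num
      linarith
    rw [Finset.sum_eq_zero_iff_of_nonneg (fun u hu => by
      have := le2 w hw u (Finset.mem_of_mem_erase hu) (Finset.ne_of_mem_erase hu).symm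
      linarith)] at h2
    intro w' hw' hne
    have := h2 w' (Finset.mem_erase.mpr ⟨hne.symm, hw'⟩)
    linarith
  have hz : ∀ x w, pairZ B x ((2 : ℤ) • w - v) = 2 * pairZ B x w - pairZ B x v := by
    intro x w
    rw [pz_sub_right, pz_smul_right]
  have hzz : ∀ w ∈ S, ∀ w' ∈ S, pairZ B ((2 : ℤ) • w - v) ((2 : ℤ) • w' - v)
      = if w = w' then 8 else 0 := by
    intro w hw w' hw'
    rw [hz, pz_sub_left, pz_sub_left, pz_smul_left, pz_smul_left, h5 w' hw', hv,
      pz_comm hB w v, h5 w hw]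
    split_ifs with e
    · subst e; rw [hN w hw]; norm_num
    · rw [eq2 w hw w' hw' e]; norm_num
  have inj : Set.InjOn (fun w : LV => (2 : ℤ) • w - v) (S : Set LV) := by
    intro w hw w' hw' e
    by_contra hne
    have h1 := hzz w hw w' hw'
    rw [if_neg hne] at h1
    have h2 := hzz w hw w hw
    rw [if_pos rfl] at h2
    have e' : (2 : ℤ) • w - v = (2 : ℤ) • w' - v := e
    rw [← e', h2] at h1
    norm_num at h1
  have hfr := (frame_le hB (S.image (fun w : LV => (2 : ℤ) • w - v))).2
  have s1 : ∑ w ∈ S, pairZ B ((2 : ℤ) • w - v) ((2 : ℤ) • w - v) = 192 := by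
    rw [Finset.sum_congr rfl (fun w hw => (hzz w hw w hw).trans (if_pos rfl)), Finset.sum_const, hc]
    norm_num
  have s2 : ∑ w ∈ S, ∑ w' ∈ S, pairZ B ((2 : ℤ) • w - v) ((2 : ℤ) • w' - v) ^ 2 = 1536 := by
    have : ∀ w ∈ S, ∑ w' ∈ S, pairZ B ((2 : ℤ) • w - v) ((2 : ℤ) • w' - v) ^ 2 = 64 := by
      intro w hw
      rw [Finset.sum_congr rfl (fun w' hw' => by rw [hzz w hw w' hw'])]
      simp [ite_pow, hw]
    rw [Finset.sum_congr rfl this, Finset.sum_const, hc]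
    norm_num
  simp only [Finset.sum_image inj] at hfr
  rw [s1, s2] at hfr
  have hq := hfr (by norm_num)
  simp only [hz] at hq
  refine ⟨?_, ?_⟩
  · intro x
    rw [Finset.sum_sub_distrib, ← Finset.mul_sum, hsx, Finset.sum_const, hc]
    norm_num
    ring
  · intro x y
    have q1 := hq x
    have q2 := hq y
    have q3 := hq (x + y)
    rw [N_add hB] at q3
    have : ∀ w ∈ S, (2 * pairZ B (x + y) w - pairZ B (x + y) v) ^ 2
        = (2 * pairZ B x w - pairZ B x v) ^ 2 + (2 * pairZ B y w - pairZ B y v) ^ 2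
          + 2 * ((2 * pairZ B x w - pairZ B x v) * (2 * pairZ B y w - pairZ B y v)) := by
      intro w _
      rw [pz_add_left, pz_add_left]; ring
    rw [Finset.sum_congr rfl this, Finset.sum_add_distrib, Finset.sum_add_distrib,
      ← Finset.mul_sum] at q3
    linarith

lemma pack_even (hB : IsLeech B) {S W : Finset LV} {v : LV} (hv : pairZ B v v = 12)
    (hN : ∀ w ∈ S, pairZ B w w = 4) (h5 : ∀ w ∈ S, pairZ B v w = 5) (hc : S.card = 24)
    (q : ℕ) (hq : 1 ≤ q) (hW : ∀ x ∈ W, pairZ B x x = 2 * q ∧ pairZ B v x = 2 * q) :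
    W.card * (4 * q).choose (4 * q - 3) ≤ Nat.choose 24 (4 * q - 3) := by
  classical
  obtain ⟨f1, f2⟩ := six_frame hB hv hN h5 hc
  have key : ∀ x ∈ W, ∀ w ∈ S, (2 * pairZ B x w - pairZ B x v)
      = if pairZ B x w + 1 = (q : ℤ) then -2 else 0 := by
    intro x hx
    have ev : pairZ B x v = 2 * q := by rw [pz_comm hB, (hW x hx).2]
    have a1 := f1 x
    have a2 := f2 x x
    rw [(hW x hx).1] at a2
    have h0 : ∑ w ∈ S, (2 * pairZ B x w - pairZ B x v) * (2 * pairZ B x w - pairZ B x v + 2) = 0 := by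
      simp only [mul_add, Finset.sum_add_distrib]
      rw [a2, ← Finset.sum_mul, a1, ev]; ring
    rw [Finset.sum_eq_zero_iff_of_nonneg (fun w _ => by
      rw [ev]
      rcases le_or_gt (q : ℤ) (pairZ B x w) with g | g
      · exact mul_nonneg (by linarith) (by linarith)
      · exact mul_nonneg_of_nonpos_of_nonpos (by omega) (by omega))] at h0
    intro w hw
    have h1 := h0 w hw
    rw [ev] at h1 ⊢
    rcases mul_eq_zero.mp h1 with h1 | h1 <;> split_ifs <;> omega
  have pk := packing S W (fun x => S.filter (fun w => pairZ B x w + 1 = (q : ℤ))) (4 * q) (4 * q - 3)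
    (fun x _ => Finset.filter_subset _ _) ?_ ?_
  · rwa [hc] at pk
  · intro x hx
    have a1 := f1 x
    rw [Finset.sum_congr rfl (key x hx), pz_comm hB x v, (hW x hx).2, Finset.sum_ite,
      Finset.sum_const, Finset.sum_const_zero] at a1
    simp only [nsmul_eq_mul] at a1
    omega
  · intro x hx y hy hne
    have a2 := f2 x y
    have a3 := N_ge_four hB (sub_ne_zero.mpr hne)
    rw [N_sub hB, (hW x hx).1, (hW y hy).1] at a3
    have : ∀ w ∈ S, (2 * pairZ B x w - pairZ B x v) * (2 * pairZ B y w - pairZ B y v)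
        = if pairZ B x w + 1 = (q : ℤ) ∧ pairZ B y w + 1 = (q : ℤ) then 4 else 0 := by
      intro w hw
      rw [key x hx w hw, key y hy w hw]
      by_cases g1 : pairZ B x w + 1 = (q : ℤ) <;> by_cases g2 : pairZ B y w + 1 = (q : ℤ) <;>
        simp [g1, g2]
    rw [Finset.sum_congr rfl this, Finset.sum_ite, Finset.sum_const, Finset.sum_const_zero] at a2
    simp only [nsmul_eq_mul] at a2
    rw [← Finset.filter_and]
    omega

lemma pack_odd (hB : IsLeech B) {S W : Finset LV} {v : LV} (hv : pairZ B v v = 12)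
    (hN : ∀ w ∈ S, pairZ B w w = 4) (h5 : ∀ w ∈ S, pairZ B v w = 5) (hc : S.card = 24)
    (hW : ∀ x ∈ W, pairZ B x x = 4 ∧ pairZ B v x = 3) :
    W.card ≤ 6072 := by
  classical
  obtain ⟨f1, f2⟩ := six_frame hB hv hN h5 hc
  have key : ∀ x ∈ W, ∃ i ∈ S, pairZ B x i = 0 ∧ ∀ w ∈ S.erase i, (2 * pairZ B x w - pairZ B x v)
      = if pairZ B x w = 2 then 1 else -1 := by
    intro x hx
    have ev : pairZ B x v = 3 := by rw [pz_comm hB, (hW x hx).2]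
    have a1 := f1 x
    have a2 := f2 x x
    rw [(hW x hx).1] at a2
    have le2 : ∀ w ∈ S, pairZ B x w ≤ 2 := by
      intro w hw
      have a3 := N_ge_four hB (x := x - w) (by
        rw [sub_ne_zero]; rintro rfl
        have := h5 x hw
        have := (hW x hx).2
        omega)
      rw [N_sub hB, (hW x hx).1, hN w hw] at a3
      omega
    have h0 : ∑ w ∈ S, ((2 - pairZ B x w) * (1 - pairZ B x w)) = 2 := by
      have : ∀ w ∈ S, 4 * ((2 - pairZ B x w) * (1 - pairZ B x w))
          = (2 * pairZ B x w - pairZ B x v) * (2 * pairZ B x w - pairZ B x v) - 1 := by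
        intro w _
        rw [ev]; ring
      have h := Finset.sum_congr rfl this
      rw [← Finset.mul_sum, Finset.sum_sub_distrib, a2, Finset.sum_const, hc] at h
      norm_num at h
      linarith
    have nn : ∀ w ∈ S, 0 ≤ (2 - pairZ B x w) * (1 - pairZ B x w) := by
      intro w hw
      have := le2 w hw
      rcases le_or_gt (pairZ B x w) 1 with g | g
      · exact mul_nonneg (by linarith) (by linarith)
      · exact mul_nonneg_of_nonpos_of_nonpos (by omega) (by omega)
    obtain ⟨i, hi, hi0⟩ := Finset.exists_ne_zero_of_sum_ne_zero (by rw [h0]; norm_num)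
    have hi1 : pairZ B x i ≤ 0 := by
      have := le2 i hi
      by_contra g
      have : pairZ B x i = 1 ∨ pairZ B x i = 2 := by omega
      rcases this with e | e <;> rw [e] at hi0 <;> norm_num at hi0
    rw [← Finset.add_sum_erase S _ hi] at h0
    have nn' := Finset.sum_nonneg (s := S.erase i) fun w hw => nn w (Finset.mem_of_mem_erase hw)
    have hi2 : pairZ B x i = 0 := by nlinarith
    rw [hi2] at h0
    have h0' : ∑ w ∈ S.erase i, ((2 - pairZ B x w) * (1 - pairZ B x w)) = 0 := by linarith
    rw [Finset.sum_eq_zero_iff_of_nonneg fun w hw => nn w (Finset.mem_of_mem_erase hw)] at h0'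
    refine ⟨i, hi, hi2, ?_⟩
    intro w hw
    have h1 := h0' w hw
    rw [ev]
    rcases mul_eq_zero.mp h1 with h1 | h1 <;> split_ifs <;> omega
  choose! g hgS hg0 hg using key
  have cover : W.card = ∑ i ∈ S, (W.filter (fun x => g x = i)).card :=
    Finset.card_eq_sum_card_fiberwise fun x hx => hgS x hx
  have each : ∀ i ∈ S, (W.filter (fun x => g x = i)).card ≤ 253 := by
    intro i hi
    have pk := packing (S.erase i) (W.filter (fun x => g x = i))
      (fun x => (S.erase i).filter (fun w => pairZ B x w = 2)) 7 4
      (fun x _ => Finset.filter_subset _ _) ?_ ?_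
    · rw [Finset.card_erase_of_mem hi, hc] at pk
      have e1 : Nat.choose 7 4 = 35 := by decide
      have e2 : Nat.choose (24 - 1) 4 = 8855 := by simp [Nat.choose]
      rw [e1, e2] at pk
      omega
    · intro x hx
      rw [Finset.mem_filter] at hx
      obtain ⟨hx, rfl⟩ := hx
      have a1 := f1 x
      rw [← Finset.add_sum_erase S _ hi, hg0 x hx, Finset.sum_congr rfl (hg x hx),
        pz_comm hB x v, (hW x hx).2, Finset.sum_ite,
        Finset.sum_const, Finset.sum_const] at a1
      have a2 := Finset.card_filter_add_card_filter_not (s := S.erase (g x)) (fun w => pairZ B x w = 2)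
      rw [Finset.card_erase_of_mem hi, hc] at a2
      simp only [nsmul_eq_mul] at a1
      omega
    · intro x hx y hy hne
      rw [Finset.mem_filter] at hx hy
      obtain ⟨hx, rfl⟩ := hx
      obtain ⟨hy, hgy⟩ := hy
      have card7 : ∀ x ∈ W, ((S.erase (g x)).filter (fun w => pairZ B x w = 2)).card = 7 := by
        intro x hx
        have a1 := f1 x
        rw [← Finset.add_sum_erase S _ (hgS x hx), hg0 x hx, Finset.sum_congr rfl (hg x hx),
          pz_comm hB x v, (hW x hx).2, Finset.sum_ite,
          Finset.sum_const, Finset.sum_const] at a1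
        have a2 := Finset.card_filter_add_card_filter_not (s := S.erase (g x)) (fun w => pairZ B x w = 2)
        rw [Finset.card_erase_of_mem (hgS x hx), hc] at a2
        simp only [nsmul_eq_mul] at a1
        omega
      have a2 := f2 x y
      have a3 := N_ge_four hB (sub_ne_zero.mpr hne)
      rw [N_sub hB, (hW x hx).1, (hW y hy).1] at a3
      have hy0 := hg0 y hy
      have hgy' := hg y hy
      have c1 := card7 x hx
      have c2 := card7 y hy
      rw [hgy] at hy0 hgy' c2
      have : ∀ w ∈ S.erase (g x), (2 * pairZ B x w - pairZ B x v) * (2 * pairZ B y w - pairZ B y v)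
          = 4 * (if pairZ B x w = 2 ∧ pairZ B y w = 2 then 1 else 0)
            - 2 * (if pairZ B x w = 2 then 1 else 0) - 2 * (if pairZ B y w = 2 then 1 else 0) + 1 := by
        intro w hw
        rw [hg x hx w hw, hgy' w hw]
        by_cases g1 : pairZ B x w = 2 <;> by_cases g2 : pairZ B y w = 2 <;> simp [g1, g2]
      rw [← Finset.add_sum_erase S _ hi, hg0 x hx, hy0, Finset.sum_congr rfl this,
        Finset.sum_add_distrib, Finset.sum_sub_distrib, Finset.sum_sub_distrib,
        ← Finset.mul_sum, ← Finset.mul_sum, ← Finset.mul_sum, Finset.sum_boole, Finset.sum_boole,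
        Finset.sum_boole, c1, c2, pz_comm hB x v, pz_comm hB y v, (hW x hx).2, (hW y hy).2,
        Finset.sum_const, Finset.card_erase_of_mem hi, hc] at a2
      rw [← Finset.filter_and]
      norm_num at a2
      omega
  rw [cover]
  refine (Finset.sum_le_sum each).trans ?_
  rw [Finset.sum_const, hc]
  norm_num

section
variable {L O3 O4 O5 O6a O6b O7 O8b O9b : Finset LV}

lemma Reps.k6a (h : Reps B L O3 O4 O5 O6a O6b O7 O8b O9b) {O : Finset LV} {a : ℤ}
    (hO : IsOrb B O a) {v : LV} (hv : v ∈ O6a) (hc : cnt B L v 5 = 24) :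
    (a = 12 → (O.filter (fun y => resid 3 y = resid 3 v)).card ≤ 783) ∧
    (a = 15 → (O.filter (fun y => resid 3 y = resid 3 v)).card ≤ 13229) := by
  classical
  have hB := h.hB
  have nv : pairZ B v v = 2 * 6 := h.o6a.norm v hv
  unfold cnt at hc
  have hN : ∀ w ∈ L.filter (fun w => pairZ B v w = 5), pairZ B w w = 4 :=
    fun w hw => (h.hL w).mp (Finset.mem_filter.mp hw).1
  have h5 : ∀ w ∈ L.filter (fun w => pairZ B v w = 5), pairZ B v w = 5 :=
    fun w hw => (Finset.mem_filter.mp hw).2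
  constructor
  · rintro rfl
    have b := pack_even hB (W := L.filter (fun w => pairZ B v w = 4)) nv hN h5 hc 2 (by norm_num)
      (fun x hx => by
        rw [Finset.mem_filter, h.hL] at hx
        exact ⟨by rw [hx.1]; norm_num, by rw [hx.2]; norm_num⟩)
    have e1 : Nat.choose (4 * 2) (4 * 2 - 3) = 56 := by decide
    have e2 : Nat.choose 24 (4 * 2 - 3) = 42504 := by simp [Nat.choose]
    rw [e1, e2] at b
    refine (K_le (W := L.filter (fun w => pairZ B v w = 4) ∪
      (L.filter (fun w => pairZ B v w = 5)).image (fun w => v - w)) ?_).trans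
      ((Finset.card_union_le _ _).trans
        ((Nat.add_le_add_left Finset.card_image_le _).trans (by omega)))
    intro u hu hr
    have nu := hO.norm u hu
    obtain ⟨w, t, x, h1, h2, h3, h4, h5, h6, h7, h8, h9, h10⟩ :=
      cong3 hB nv nu hr.symm (by rintro rfl; omega)
    refine ⟨w, ?_, h1⟩
    rw [Finset.mem_union, Finset.mem_image, Finset.mem_filter, h.hL]
    have ht : t = 2 ∨ t = 3 ∨ t = 4 := by omega
    rcases ht with rfl | rfl | rfl
    · left; omega
    · right
      refine ⟨v - w, ?_, by abel⟩
      have e : pairZ B v (v - w) = 5 := by rw [pz_sub_right]; omega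
      rw [Finset.mem_filter, h.hL]; omega
    · norm_num at h8
  · rintro rfl
    have b := pack_odd hB (W := L.filter (fun w => pairZ B v w = 3)) nv hN h5 hc
      (fun x hx => by
        rw [Finset.mem_filter, h.hL] at hx
        exact hx)
    set G := (O.image (fun u : LV => (fun i => (v i - u i) / 3 : LV))).filter
      (fun w => pairZ B w w = 6 ∧ pairZ B v w = 6) with hG
    have b' := pack_even hB (W := G) nv hN h5 hc 3 (by norm_num)
      (fun x hx => by
        rw [hG, Finset.mem_filter] at hx
        exact ⟨by rw [hx.2.1]; norm_num, by rw [hx.2.2]; norm_num⟩)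
    have e1 : Nat.choose (4 * 3) (4 * 3 - 3) = 220 := by decide
    have e2 : Nat.choose 24 (4 * 3 - 3) = 1307504 := by simp [Nat.choose]
    rw [e1, e2] at b'
    refine (K_le (W := L.filter (fun w => pairZ B v w = 3) ∪ G) ?_).trans
      ((Finset.card_union_le _ _).trans (by omega))
    intro u hu hr
    have nu := hO.norm u hu
    obtain ⟨w, t, x, h1, h2, h3, h4, h5, h6, h7, h8, h9, h10⟩ :=
      cong3 hB nv nu hr.symm (by rintro rfl; omega)
    refine ⟨w, ?_, h1⟩
    rw [Finset.mem_union, Finset.mem_filter, h.hL, hG, Finset.mem_filter]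
    have ht : t = 2 ∨ t = 3 ∨ t = 4 := by omega
    rcases ht with rfl | rfl | rfl
    · left; omega
    · right
      refine ⟨Finset.mem_image.mpr ⟨u, hu, ?_⟩, by omega, by omega⟩
      funext i
      rw [h1]
      simp only [Pi.sub_apply, Pi.smul_apply, smul_eq_mul]
      omega
    · rcases h10 with rfl | h10 <;> omega

end

end LeechAux

section LeechAux

variable {B : Matrix (Fin 24) (Fin 24) ℤ}

/-- some vectors of the two orbits are congruent modulo 3 -/
def OK3 (O R : Finset LV) : Prop := ∃ v ∈ R, ∃ u ∈ O, resid 3 u = resid 3 v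

section
variable {L O3 O4 O5 O6a O6b O7 O8b O9b : Finset LV}

lemma Reps.cand (h : Reps B L O3 O4 O5 O6a O6b O7 O8b O9b) {O : Finset LV} {a : ℤ} {m : ℕ}
    (hO : IsOrb B O a) (hm : O.card = m * 65520) (ha : 7 ≤ a) (ha' : a ≤ 16)
    (five : a ≠ 9 → ∀ v ∈ O6a, cnt B L v 5 = 24) :
    (OK3 O L ∧ ∃ k, m = 3 * k ∧ (3 : ℤ) ∣ a - 2 ∧ k ≤ 196560 ∧ (a = 8 → k ≤ 1) ∧ (a = 11 → k ≤ 0)) ∨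
    (OK3 O O3 ∧ ∃ k, m = 256 * k ∧ (3 : ℤ) ∣ a - 3 ∧ (a = 9 → k ≤ 0) ∧ (a = 12 → k ≤ 10921) ∧
      (a = 15 → k ≤ 24570)) ∨
    (OK3 O O4 ∧ ∃ k, m = 6075 * k ∧ (3 : ℤ) ∣ a - 4 ∧ (a = 10 → k ≤ 8190) ∧ (a = 13 → k ≤ 14560) ∧
      (a = 16 → k ≤ 32761)) ∨
    (OK3 O O5 ∧ ∃ k, m = 70656 * k ∧ (3 : ℤ) ∣ a - 5) ∨
    (OK3 O O6a ∧ ∃ k, m = 518400 * k ∧ (3 : ℤ) ∣ a - 6 ∧ (a = 12 → k ≤ 783) ∧ (a = 15 → k ≤ 13229)) ∨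
    (OK3 O O6b ∧ ∃ k, 3 * m = 6900 * k ∧ (3 : ℤ) ∣ a - 6 ∧ (a = 12 → k ≤ 98304) ∧
      (a = 15 → k ≤ 294840)) ∨
    (OK3 O O7 ∧ ∃ k, 2 * m = 2861568 * k ∧ (3 : ℤ) ∣ a - 7) ∨
    (OK3 O O8b ∧ ∃ k, 9 * m = 12295800 * k ∧ (3 : ℤ) ∣ a - 8) ∨
    (OK3 O O9b ∧ ∃ k, 36 * m = 32972800 * k ∧ (3 : ℤ) ∣ a - 9 ∧ (a = 15 → ∃ j, m = 32972800 * j)) := by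
  obtain ⟨u, hu⟩ := hO.ne
  obtain ⟨i, v, hv, hr⟩ := h.main.1 u
  have nu := hO.norm u hu
  have hd := type_mod h.hB nu ((h.orb i).norm v hv) hr
  have hk := orb_count hO (h.orb i) hu hv
  rw [hr, h.main.2 i v hv, hm] at hk
  have ok : OK3 O (repF L O3 O4 O5 O6a O6b O7 O8b O9b i) := ⟨v, hv, u, hu, hr⟩
  have k2 := fun hv => h.k2 hO (v := v) hv
  have k3 := fun hv => h.k3 hO (v := v) hv
  have k4 := fun hv => h.k4 hO (v := v) hv
  have k6a := fun hv h9 => h.k6a hO (v := v) hv (five h9 v hv)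
  have k6b := fun hv => h.k6b hO (v := v) hv
  generalize hkk : (O.filter (fun y => resid 3 y = resid 3 v)).card = k at *
  clear hkk
  fin_cases i
  · exfalso
    have hv' : v ∈ ({0} : Finset LV) := hv
    rw [Finset.mem_singleton] at hv'
    rw [hv'] at hr
    exact no_zero h.hB nu hr (by omega) (by omega)
  · change m * 65520 * 1 = L.card * k at hk
    change (3 : ℤ) ∣ a - 2 at hd
    rw [h.c2] at hk
    obtain ⟨e1, e2, e3⟩ := k2 hv (by omega)
    exact Or.inl ⟨ok, k, by omega, hd, e1, e2, e3⟩
  · change m * 65520 * 1 = O3.card * k at hk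
    rw [h.c3] at hk
    exact Or.inr (Or.inl ⟨ok, k, by omega, hd, k3 hv⟩)
  · change m * 65520 * 1 = O4.card * k at hk
    rw [h.c4] at hk
    exact Or.inr (Or.inr (Or.inl ⟨ok, k, by omega, hd, k4 hv⟩))
  · change m * 65520 * 1 = O5.card * k at hk
    rw [h.c5] at hk
    exact Or.inr (Or.inr (Or.inr (Or.inl ⟨ok, k, by omega, hd⟩)))
  · change m * 65520 * 1 = O6a.card * k at hk
    rw [h.c6a] at hk
    exact Or.inr (Or.inr (Or.inr (Or.inr (Or.inl ⟨ok, k, by omega, hd,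
      fun e => (k6a hv (by omega)).1 e, fun e => (k6a hv (by omega)).2 e⟩))))
  · change m * 65520 * 3 = O6b.card * k at hk
    rw [h.c6b] at hk
    exact Or.inr (Or.inr (Or.inr (Or.inr (Or.inr (Or.inl ⟨ok, k, by omega, hd, k6b hv⟩)))))
  · change m * 65520 * 2 = O7.card * k at hk
    rw [h.c7] at hk
    exact Or.inr (Or.inr (Or.inr (Or.inr (Or.inr (Or.inr (Or.inl ⟨ok, k, by omega, hd⟩))))))
  · change m * 65520 * 9 = O8b.card * k at hk
    rw [h.c8b] at hk
    exact Or.inr (Or.inr (Or.inr (Or.inr (Or.inr (Or.inr (Or.inr (Or.inl ⟨ok, k, by omega, hd⟩)))))))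
  · change m * 65520 * 36 = O9b.card * k at hk
    rw [h.c9b] at hk
    refine Or.inr (Or.inr (Or.inr (Or.inr (Or.inr (Or.inr (Or.inr (Or.inr ⟨ok, k, by omega, hd, ?_⟩)))))))
    rintro rfl
    obtain ⟨j, hj⟩ := h.k9b hO hu hv hr
    rw [h.c9b, hm] at hj
    exact ⟨j, by omega⟩

lemma Reps.nine_a (h : Reps B L O3 O4 O5 O6a O6b O7 O8b O9b) {O : Finset LV}
    (hO : IsOrb B O 9) (hm : O.card = 12441600 * 65520) :
    OK3 O O6a ∧ ∀ v ∈ O6a, cnt B L v 5 = 24 := by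
  classical
  have ok : OK3 O O6a := by
    rcases h.cand hO hm (by norm_num) (by norm_num) (by norm_num) with
      ⟨hk, k, h1, h2⟩ | ⟨hk, k, h1, h2⟩ | ⟨hk, k, h1, h2⟩ | ⟨hk, k, h1, h2⟩ | ⟨hk, k, h1, h2⟩ |
      ⟨hk, k, h1, h2⟩ | ⟨hk, k, h1, h2⟩ | ⟨hk, k, h1, h2⟩ | ⟨hk, k, h1, h2⟩ <;>
    first | exact hk | (exfalso; omega)
  refine ⟨ok, ?_⟩
  obtain ⟨v₀, hv₀, u, hu, hr⟩ := ok
  intro v hv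
  have hk := orb_count hO h.o6a hu hv
  have e : (O6a.filter (fun y => resid 3 y = resid 3 v₀)).card = 1 := h.main.2 5 v₀ hv₀
  rw [hr, e, hm, h.c6a] at hk
  have b5 := cnt_five h.hB (L := L) (fun w hw => (h.hL w).mp hw) (v := v) (h.o6a.norm v hv)
  have kl := K_le (O := O) (W := L.filter (fun w => pairZ B v w = 5)) (v := v) (by
    intro u hu hr
    obtain ⟨w, h1, h2, h3⟩ := conj_6_9 h.hB (h.o6a.norm v hv) (hO.norm u hu) hr.symm
    exact ⟨w, Finset.mem_filter.mpr ⟨(h.hL w).mpr h1, h2⟩, h3⟩)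
  unfold cnt at b5 ⊢
  omega

/-- predicate used to assemble -/
def Cls (B : Matrix (Fin 24) (Fin 24) ℤ) (R : Finset LV) (O : Set LV) : Prop :=
  ∃ (F : Finset LV) (a : ℤ), (F : Set LV) = O ∧ IsOrb B F a ∧ OK3 F R

lemma cls_self {R : Finset LV} {a : ℤ} (hR : IsOrb B R a) : Cls B R (R : Set LV) := by
  obtain ⟨v, hv⟩ := hR.ne
  exact ⟨R, a, rfl, hR, v, hv, v, hv, rfl⟩

lemma conj_iff (O O' : Set LV) :
    conjOrb3 O O' ↔ ∃ v ∈ O, ∃ u ∈ O', resid 3 v = resid 3 u := by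
  unfold conjOrb3
  simp only [resid_eq_iff]
  norm_cast

lemma OK3.link {O R : Finset LV} {a b : ℤ} (h : OK3 O R) (hO : IsOrb B O a) (hR : IsOrb B R b) :
    (∀ u ∈ O, ∃ v ∈ R, resid 3 u = resid 3 v) ∧ (∀ v ∈ R, ∃ u ∈ O, resid 3 u = resid 3 v) := by
  obtain ⟨v₀, hv₀, u₀, hu₀, hr⟩ := h
  constructor
  · intro u hu
    obtain ⟨s, hs, rfl⟩ := hO.trans u₀ hu₀ u hu
    exact ⟨_, hR.closed s hs v₀ hv₀, (resid_cg 3 hs _ _).mpr hr⟩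
  · intro v hv
    obtain ⟨s, hs, rfl⟩ := hR.trans v₀ hv₀ v hv
    exact ⟨_, hO.closed s hs u₀ hu₀, (resid_cg 3 hs _ _).mpr hr⟩

lemma Reps.assemble (h : Reps B L O3 O4 O5 O6a O6b O7 O8b O9b) (C : Fin 10 → List (Set LV))
    (hC : ∀ i, ∀ O ∈ C i, Cls B (repF L O3 O4 O5 O6a O6b O7 O8b O9b i) O)
    (i j : Fin 10)
    (O O' : Set LV) (hO : O ∈ C i) (hO' : O' ∈ C j) : conjOrb3 O O' ↔ C i = C j := by
  have dis : ∀ i j, ∀ v ∈ repF L O3 O4 O5 O6a O6b O7 O8b O9b i,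
      ∀ u ∈ repF L O3 O4 O5 O6a O6b O7 O8b O9b j, resid 3 v = resid 3 u → i = j := by
    intro i j v hv u hu hr
    rcases lt_trichotomy i j with g | g | g
    · exact (h.disj i j g v hv u hu hr).elim
    · exact g
    · exact (h.disj j i g u hu v hv hr.symm).elim
  rw [conj_iff]
  constructor
  · rintro ⟨v, hv, u, hu, hr⟩
    obtain ⟨F, a, rfl, oF, k⟩ := hC i O hO
    obtain ⟨F', a', rfl, oF', k'⟩ := hC j O' hO'
    obtain ⟨x, hx, ex⟩ := (k.link oF (h.orb i)).1 v hv
    obtain ⟨y, hy, ey⟩ := (k'.link oF' (h.orb j)).1 u hu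
    rw [dis i j x hx y hy (by rw [← ex, hr, ey])]
  · intro e
    rw [e] at hO
    obtain ⟨F, a, rfl, oF, k⟩ := hC j O hO
    obtain ⟨F', a', rfl, oF', k'⟩ := hC j O' hO'
    obtain ⟨v, hv⟩ := oF.ne
    obtain ⟨x, hx, ex⟩ := (k.link oF (h.orb j)).1 v hv
    obtain ⟨u, hu, eu⟩ := (k'.link oF' (h.orb j)).2 x hx
    exact ⟨v, hv, u, hu, ex.trans eu.symm⟩

end

end LeechAux

section LeechAux

variable {B : Matrix (Fin 24) (Fin 24) ℤ}

/-- the arithmetic conditions force the `i`-th class -/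
def pickP (i : Fin 10) (x m : ℕ) : Prop := ∀ P : Fin 10 → Prop,
    ((P 1 ∧ ∃ k, m = 3 * k ∧ (3 : ℤ) ∣ x - 2 ∧ k ≤ 196560 ∧ (x = 8 → k ≤ 1) ∧ (x = 11 → k ≤ 0)) ∨
    (P 2 ∧ ∃ k, m = 256 * k ∧ (3 : ℤ) ∣ x - 3 ∧ (x = 9 → k ≤ 0) ∧ (x = 12 → k ≤ 10921) ∧
      (x = 15 → k ≤ 24570)) ∨
    (P 3 ∧ ∃ k, m = 6075 * k ∧ (3 : ℤ) ∣ x - 4 ∧ (x = 10 → k ≤ 8190) ∧ (x = 13 → k ≤ 14560) ∧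
      (x = 16 → k ≤ 32761)) ∨
    (P 4 ∧ ∃ k, m = 70656 * k ∧ (3 : ℤ) ∣ x - 5) ∨
    (P 5 ∧ ∃ k, m = 518400 * k ∧ (3 : ℤ) ∣ x - 6 ∧ (x = 12 → k ≤ 783) ∧ (x = 15 → k ≤ 13229)) ∨
    (P 6 ∧ ∃ k, 3 * m = 6900 * k ∧ (3 : ℤ) ∣ x - 6 ∧ (x = 12 → k ≤ 98304) ∧
      (x = 15 → k ≤ 294840)) ∨
    (P 7 ∧ ∃ k, 2 * m = 2861568 * k ∧ (3 : ℤ) ∣ x - 7) ∨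
    (P 8 ∧ ∃ k, 9 * m = 12295800 * k ∧ (3 : ℤ) ∣ x - 8) ∨
    (P 9 ∧ ∃ k, 36 * m = 32972800 * k ∧ (3 : ℤ) ∣ x - 9 ∧ (x = 15 → ∃ j, m = 32972800 * j))) → P i

section
variable {L O3 O4 O5 O6a O6b O7 O8b O9b : Finset LV}

lemma Reps.pick (h : Reps B L O3 O4 O5 O6a O6b O7 O8b O9b) (five : ∀ v ∈ O6a, cnt B L v 5 = 24)
    {O : Set LV} {x m : ℕ} (hO : OrbitData B O x (m * 65520)) (i : Fin 10)
    (hx : m ≠ 0 ∧ 7 ≤ x ∧ x ≤ 16) (hp : pickP i x m) :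
    Cls B (repF L O3 O4 O5 O6a O6b O7 O8b O9b i) O := by
  obtain ⟨F, hF, oF, cF⟩ := orbitData_orb hO (by omega)
  have c := h.cand oF cF (by omega) (by omega) (fun _ => five)
  refine ⟨F, _, hF, oF, ?_⟩
  refine hp (fun i => OK3 F (repF L O3 O4 O5 O6a O6b O7 O8b O9b i)) ?_
  have e : ∀ n : ℕ, (x : ℤ) = (n : ℤ) ↔ x = n := fun n => Nat.cast_inj
  have e8 := e 8
  have e9 := e 9
  have e10 := e 10
  have e11 := e 11
  have e12 := e 12
  have e13 := e 13
  have e15 := e 15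
  have e16 := e 16
  push_cast at e8 e9 e10 e11 e12 e13 e15 e16
  rw [e8, e9, e10, e11, e12, e13, e15, e16] at c
  exact c

end

lemma reps_mk (hB : IsLeech B) {L O3 O4 O5 O6a O6b O7 O8b O9b : Finset LV}
    (o2 : IsOrb B L 2) (o3 : IsOrb B O3 3) (o4 : IsOrb B O4 4) (o5 : IsOrb B O5 5)
    (o6a : IsOrb B O6a 6) (o6b : IsOrb B O6b 6) (o7 : IsOrb B O7 7) (o8b : IsOrb B O8b 8)
    (o9b : IsOrb B O9b 9) (c2 : L.card = 3 * 65520) (c3 : O3.card = 256 * 65520)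
    (c4 : O4.card = 6075 * 65520) (c5 : O5.card = 70656 * 65520) (c6a : O6a.card = 518400 * 65520)
    (c6b : O6b.card = 6900 * 65520) (c7 : O7.card = 2861568 * 65520)
    (c8b : O8b.card = 12295800 * 65520) (c9b : O9b.card = 32972800 * 65520) :
    Reps B L O3 O4 O5 O6a O6b O7 O8b O9b := by
  obtain ⟨hL, hfr⟩ := mod2_main hB o2 o3 o4 c2 c3 c4
  refine ⟨hB, o2, o3, o4, o5, o6a, o6b, o7, o8b, o9b, c2, c3, c4, c5, c6a, c6b, c7, c8b, c9b,
    fun x => ⟨fun hx => o2.norm x hx, hL x⟩, mom3 hB o2 o3 o4 c2 c3 hL hfr, ?_⟩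
  intro v hv
  have := mom4 hB o2 o4 (fun f hf => ⟨(hfr f hf).1, (hfr f hf).2.2⟩) v hv
  rw [c2] at this
  push_cast at this
  linarith

end LeechAux

/-- Theorem (Sun–Wang): among the Conway orbits of Leech vectors of type at most 16, the
conjugacy classes modulo `3Λ` are exactly: `{O₀}`; `{O₂, O_{8a}, O_{14c}}`;
`{O₃, O_{12a}, O_{12b}, O_{15a}}`; `{O₄, O_{10b}, O_{13a}, O_{16a}, O_{16b}, O_{16d}}`;
`{O₅, O_{8c}, O_{11a}, O_{14a}, O_{14d}}`; `{O_{6a}, O_{9a}, O_{12c}, O_{12e}, O_{15b}, O_{15e}}`;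
`{O_{6b}, O_{12d}, O_{15c}}`; `{O₇, O_{10a}, O_{10c}, O_{13b}, O_{13c}, O_{16c}, O_{16e}, O_{16f}, O_{16g}}`;
`{O_{8b}, O_{11b}, O_{14b}, O_{14e}}`; `{O_{9b}, O_{12f}, O_{15d}}`: two orbits of the list are
conjugate modulo `3Λ` if and only if they lie in the same class. -/
theorem leech_orbits_conjugacy_mod_three
    (B : Matrix (Fin 24) (Fin 24) ℤ) (hB : IsLeech B)
    (O2 O3 O4 O5 O6a O6b O7 O8a O8b O8c O9a O9b O10a O10b O10c O11a O11b O12a O12b O12c O12d O12e O12f O13a O13b O13c O14a O14b O14c O14d O14e O15a O15b O15c O15d O15e O16a O16b O16c O16d O16e O16f O16g : Set LV)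
    (h2 : OrbitData B O2 2 (3 * 65520))
    (h3 : OrbitData B O3 3 (256 * 65520))
    (h4 : OrbitData B O4 4 (6075 * 65520))
    (h5 : OrbitData B O5 5 (70656 * 65520))
    (h6a : OrbitData B O6a 6 (518400 * 65520))
    (h6b : OrbitData B O6b 6 (6900 * 65520))
    (h7 : OrbitData B O7 7 (2861568 * 65520))
    (h8a : OrbitData B O8a 8 (3 * 65520))
    (h8b : OrbitData B O8b 8 (12295800 * 65520))
    (h8c : OrbitData B O8c 8 (141312 * 65520))
    (h9a : OrbitData B O9a 9 (12441600 * 65520))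
    (h9b : OrbitData B O9b 9 (32972800 * 65520))
    (h10a : OrbitData B O10a 10 (143078400 * 65520))
    (h10b : OrbitData B O10b 10 (279450 * 65520))
    (h10c : OrbitData B O10c 10 (1430784 * 65520))
    (h11a : OrbitData B O11a 11 (19430400 * 65520))
    (h11b : OrbitData B O11b 11 (393465600 * 65520))
    (h12a : OrbitData B O12a 12 (256 * 65520))
    (h12b : OrbitData B O12b 12 (141312 * 65520))
    (h12c : OrbitData B O12c 12 (12441600 * 65520))
    (h12d : OrbitData B O12d 12 (2049300 * 65520))
    (h12e : OrbitData B O12e 12 (393465600 * 65520))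
    (h12f : OrbitData B O12f 12 (667699200 * 65520))
    (h13a : OrbitData B O13a 13 (12441600 * 65520))
    (h13b : OrbitData B O13b 13 (1007271936 * 65520))
    (h13c : OrbitData B O13c 13 (1573862400 * 65520))
    (h14a : OrbitData B O14a 14 (286156800 * 65520))
    (h14b : OrbitData B O14b 14 (5508518400 * 65520))
    (h14c : OrbitData B O14c 14 (13800 * 65520))
    (h14d : OrbitData B O14d 14 (19430400 * 65520))
    (h14e : OrbitData B O14e 14 (49183200 * 65520))
    (h15a : OrbitData B O15a 15 (2861568 * 65520))
    (h15b : OrbitData B O15b 15 (1335398400 * 65520))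
    (h15c : OrbitData B O15c 15 (19430400 * 65520))
    (h15d : OrbitData B O15d 15 (8012390400 * 65520))
    (h15e : OrbitData B O15e 15 (3147724800 * 65520))
    (h16a : OrbitData B O16a 16 (6075 * 65520))
    (h16b : OrbitData B O16b 16 (12441600 * 65520))
    (h16c : OrbitData B O16c 16 (286156800 * 65520))
    (h16d : OrbitData B O16d 16 (98366400 * 65520))
    (h16e : OrbitData B O16e 16 (5901984000 * 65520))
    (h16f : OrbitData B O16f 16 (16024780800 * 65520))
    (h16g : OrbitData B O16g 16 (3147724800 * 65520)) :
    ∀ c ∈ ([[{(0 : LV)}],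
        [O2, O8a, O14c],
        [O3, O12a, O12b, O15a],
        [O4, O10b, O13a, O16a, O16b, O16d],
        [O5, O8c, O11a, O14a, O14d],
        [O6a, O9a, O12c, O12e, O15b, O15e],
        [O6b, O12d, O15c],
        [O7, O10a, O10c, O13b, O13c, O16c, O16e, O16f, O16g],
        [O8b, O11b, O14b, O14e],
        [O9b, O12f, O15d]] : List (List (Set LV))),
    ∀ c' ∈ ([[{(0 : LV)}],
        [O2, O8a, O14c],
        [O3, O12a, O12b, O15a],
        [O4, O10b, O13a, O16a, O16b, O16d],
        [O5, O8c, O11a, O14a, O14d],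
        [O6a, O9a, O12c, O12e, O15b, O15e],
        [O6b, O12d, O15c],
        [O7, O10a, O10c, O13b, O13c, O16c, O16e, O16f, O16g],
        [O8b, O11b, O14b, O14e],
        [O9b, O12f, O15d]] : List (List (Set LV))),
    ∀ O ∈ c, ∀ O' ∈ c', (conjOrb3 O O' ↔ c = c') := by
  classical
  obtain ⟨F2, rfl, o2, c2⟩ := orbitData_orb h2 (by norm_num)
  obtain ⟨F3, rfl, o3, c3⟩ := orbitData_orb h3 (by norm_num)
  obtain ⟨F4, rfl, o4, c4⟩ := orbitData_orb h4 (by norm_num)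
  obtain ⟨F5, rfl, o5, c5⟩ := orbitData_orb h5 (by norm_num)
  obtain ⟨F6a, rfl, o6a, c6a⟩ := orbitData_orb h6a (by norm_num)
  obtain ⟨F6b, rfl, o6b, c6b⟩ := orbitData_orb h6b (by norm_num)
  obtain ⟨F7, rfl, o7, c7⟩ := orbitData_orb h7 (by norm_num)
  obtain ⟨F8b, rfl, o8b, c8b⟩ := orbitData_orb h8b (by norm_num)
  obtain ⟨F9b, rfl, o9b, c9b⟩ := orbitData_orb h9b (by norm_num)
  have h := reps_mk hB o2 o3 o4 o5 o6a o6b o7 o8b o9b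
    c2 c3 c4 c5 c6a c6b c7 c8b c9b
  obtain ⟨F9a, rfl, o9a, c9a⟩ := orbitData_orb h9a (by norm_num)
  obtain ⟨ok9a, five⟩ := h.nine_a o9a c9a
  set R := repF F2 F3 F4 F5 F6a F6b F7 F8b F9b with hR
  obtain ⟨k8a, k14c, k12a, k12b, k15a, k10b, k13a, k16a, k16b, k16d, k8c, k11a, k14a, k14d, k12c, k12e, k15b, k15e, k12d, k15c, k10a, k10c, k13b, k13c, k16c, k16e, k16f, k16g, k11b, k14b, k14e, k12f, k15d⟩ :
    Cls B (R 1) O8a ∧ Cls B (R 1) O14c ∧ Cls B (R 2) O12a ∧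
    Cls B (R 2) O12b ∧ Cls B (R 2) O15a ∧ Cls B (R 3) O10b ∧
    Cls B (R 3) O13a ∧ Cls B (R 3) O16a ∧ Cls B (R 3) O16b ∧
    Cls B (R 3) O16d ∧ Cls B (R 4) O8c ∧ Cls B (R 4) O11a ∧
    Cls B (R 4) O14a ∧ Cls B (R 4) O14d ∧ Cls B (R 5) O12c ∧
    Cls B (R 5) O12e ∧ Cls B (R 5) O15b ∧ Cls B (R 5) O15e ∧
    Cls B (R 6) O12d ∧ Cls B (R 6) O15c ∧ Cls B (R 7) O10a ∧
    Cls B (R 7) O10c ∧ Cls B (R 7) O13b ∧ Cls B (R 7) O13c ∧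
    Cls B (R 7) O16c ∧ Cls B (R 7) O16e ∧ Cls B (R 7) O16f ∧
    Cls B (R 7) O16g ∧ Cls B (R 8) O11b ∧ Cls B (R 8) O14b ∧
    Cls B (R 8) O14e ∧ Cls B (R 9) O12f ∧ Cls B (R 9) O15d := by
    refine ⟨h.pick five h8a 1 (by norm_num) ?_, h.pick five h14c 1 (by norm_num) ?_,
      h.pick five h12a 2 (by norm_num) ?_, h.pick five h12b 2 (by norm_num) ?_,
      h.pick five h15a 2 (by norm_num) ?_, h.pick five h10b 3 (by norm_num) ?_,
      h.pick five h13a 3 (by norm_num) ?_, h.pick five h16a 3 (by norm_num) ?_,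
      h.pick five h16b 3 (by norm_num) ?_, h.pick five h16d 3 (by norm_num) ?_,
      h.pick five h8c 4 (by norm_num) ?_, h.pick five h11a 4 (by norm_num) ?_,
      h.pick five h14a 4 (by norm_num) ?_, h.pick five h14d 4 (by norm_num) ?_,
      h.pick five h12c 5 (by norm_num) ?_, h.pick five h12e 5 (by norm_num) ?_,
      h.pick five h15b 5 (by norm_num) ?_, h.pick five h15e 5 (by norm_num) ?_,
      h.pick five h12d 6 (by norm_num) ?_, h.pick five h15c 6 (by norm_num) ?_,
      h.pick five h10a 7 (by norm_num) ?_, h.pick five h10c 7 (by norm_num) ?_,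
      h.pick five h13b 7 (by norm_num) ?_, h.pick five h13c 7 (by norm_num) ?_,
      h.pick five h16c 7 (by norm_num) ?_, h.pick five h16e 7 (by norm_num) ?_,
      h.pick five h16f 7 (by norm_num) ?_, h.pick five h16g 7 (by norm_num) ?_,
      h.pick five h11b 8 (by norm_num) ?_, h.pick five h14b 8 (by norm_num) ?_,
      h.pick five h14e 8 (by norm_num) ?_, h.pick five h12f 9 (by norm_num) ?_,
      h.pick five h15d 9 (by norm_num) ?_⟩ <;>
    · intro P hP
      rcases hP with
        ⟨hk, k, h1⟩ | ⟨hk, k, h1⟩ | ⟨hk, k, h1⟩ | ⟨hk, k, h1⟩ | ⟨hk, k, h1⟩ |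
        ⟨hk, k, h1⟩ | ⟨hk, k, h1⟩ | ⟨hk, k, h1⟩ | ⟨hk, k, h1, h2, h3⟩ <;>
      first
      | exact hk
      | (exfalso; omega)
  have k9a : Cls B (R 5) (F9a : Set LV) := ⟨F9a, 9, rfl, o9a, ok9a⟩
  have kr : ∀ i, Cls B (R i) (R i : Set LV) := fun i => cls_self (h.orb i)
  have k0 : Cls B (R 0) {(0 : LV)} := by
    have := kr 0
    rwa [show ((R 0 : Finset LV) : Set LV) = {(0 : LV)} from Finset.coe_singleton 0] at this
  have main := h.assemble
    ![[{(0 : LV)}],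
      [(F2 : Set LV), O8a, O14c],
      [(F3 : Set LV), O12a, O12b, O15a],
      [(F4 : Set LV), O10b, O13a, O16a, O16b, O16d],
      [(F5 : Set LV), O8c, O11a, O14a, O14d],
      [(F6a : Set LV), (F9a : Set LV), O12c, O12e, O15b, O15e],
      [(F6b : Set LV), O12d, O15c],
      [(F7 : Set LV), O10a, O10c, O13b, O13c, O16c, O16e, O16f, O16g],
      [(F8b : Set LV), O11b, O14b, O14e],
      [(F9b : Set LV), O12f, O15d]]
    ?_
  · intro c hc c' hc' O hO O' hO'
    have key : ∀ c : List (Set LV), c ∈ ([[{(0 : LV)}],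
        [(F2 : Set LV), O8a, O14c],
        [(F3 : Set LV), O12a, O12b, O15a],
        [(F4 : Set LV), O10b, O13a, O16a, O16b, O16d],
        [(F5 : Set LV), O8c, O11a, O14a, O14d],
        [(F6a : Set LV), (F9a : Set LV), O12c, O12e, O15b, O15e],
        [(F6b : Set LV), O12d, O15c],
        [(F7 : Set LV), O10a, O10c, O13b, O13c, O16c, O16e, O16f, O16g],
        [(F8b : Set LV), O11b, O14b, O14e],
        [(F9b : Set LV), O12f, O15d]] : List (List (Set LV))) →
        ∃ i, c = (![[{(0 : LV)}],
        [(F2 : Set LV), O8a, O14c],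
        [(F3 : Set LV), O12a, O12b, O15a],
        [(F4 : Set LV), O10b, O13a, O16a, O16b, O16d],
        [(F5 : Set LV), O8c, O11a, O14a, O14d],
        [(F6a : Set LV), (F9a : Set LV), O12c, O12e, O15b, O15e],
        [(F6b : Set LV), O12d, O15c],
        [(F7 : Set LV), O10a, O10c, O13b, O13c, O16c, O16e, O16f, O16g],
        [(F8b : Set LV), O11b, O14b, O14e],
        [(F9b : Set LV), O12f, O15d]] : Fin 10 → List (Set LV)) i := by
      intro c hc
      obtain ⟨n, hn, rfl⟩ := List.mem_iff_getElem.mp hc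
      refine ⟨⟨n, hn⟩, ?_⟩
      have hn' : n < 10 := hn
      interval_cases n <;> rfl
    obtain ⟨i, rfl⟩ := key c hc
    obtain ⟨j, rfl⟩ := key c' hc'
    exact main i j O O' hO hO'
  · intro i O hO
    fin_cases i
    · change O ∈ [{(0 : LV)}] at hO
      simp only [List.mem_cons, List.not_mem_nil, or_false] at hO
      exact hO ▸ k0
    · change O ∈ [(F2 : Set LV), O8a, O14c] at hO
      simp only [List.mem_cons, List.not_mem_nil, or_false] at hO
      rcases hO with rfl | rfl | rfl
      · exact kr 1
      · exact k8a
      · exact k14c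
    · change O ∈ [(F3 : Set LV), O12a, O12b, O15a] at hO
      simp only [List.mem_cons, List.not_mem_nil, or_false] at hO
      rcases hO with rfl | rfl | rfl | rfl
      · exact kr 2
      · exact k12a
      · exact k12b
      · exact k15a
    · change O ∈ [(F4 : Set LV), O10b, O13a, O16a, O16b, O16d] at hO
      simp only [List.mem_cons, List.not_mem_nil, or_false] at hO
      rcases hO with rfl | rfl | rfl | rfl | rfl | rfl
      · exact kr 3
      · exact k10b
      · exact k13a
      · exact k16a
      · exact k16b
      · exact k16d
    · change O ∈ [(F5 : Set LV), O8c, O11a, O14a, O14d] at hO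
      simp only [List.mem_cons, List.not_mem_nil, or_false] at hO
      rcases hO with rfl | rfl | rfl | rfl | rfl
      · exact kr 4
      · exact k8c
      · exact k11a
      · exact k14a
      · exact k14d
    · change O ∈ [(F6a : Set LV), (F9a : Set LV), O12c, O12e, O15b, O15e] at hO
      simp only [List.mem_cons, List.not_mem_nil, or_false] at hO
      rcases hO with rfl | rfl | rfl | rfl | rfl | rfl
      · exact kr 5
      · exact k9a
      · exact k12c
      · exact k12e
      · exact k15b
      · exact k15e
    · change O ∈ [(F6b : Set LV), O12d, O15c] at hO
      simp only [List.mem_cons, List.not_mem_nil, or_false] at hO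
      rcases hO with rfl | rfl | rfl
      · exact kr 6
      · exact k12d
      · exact k15c
    · change O ∈ [(F7 : Set LV), O10a, O10c, O13b, O13c, O16c, O16e, O16f, O16g] at hO
      simp only [List.mem_cons, List.not_mem_nil, or_false] at hO
      rcases hO with rfl | rfl | rfl | rfl | rfl | rfl | rfl | rfl | rfl
      · exact kr 7
      · exact k10a
      · exact k10c
      · exact k13b
      · exact k13c
      · exact k16c
      · exact k16e
      · exact k16f
      · exact k16g
    · change O ∈ [(F8b : Set LV), O11b, O14b, O14e] at hO
      simp only [List.mem_cons, List.not_mem_nil, or_false] at hO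
      rcases hO with rfl | rfl | rfl | rfl
      · exact kr 8
      · exact k11b
      · exact k14b
      · exact k14e
    · change O ∈ [(F9b : Set LV), O12f, O15d] at hO
      simp only [List.mem_cons, List.not_mem_nil, or_false] at hO
      rcases hO with rfl | rfl | rfl
      · exact kr 9
      · exact k12f
      · exact k15d

end
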